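/- arXiv:2012.14146 — 3 statements merged into one kernel-verified Lean document; each statement's English description precedes it below -/
import Mathlib

section
/- For every s ∈ ℝ and b ∈ ℝ there exists C > 0 such that for every τ ∈ (0,1], every δ ∈ [-4,4], and every sequence (u_n)_{n∈ℤ} of functions in H^s(𝕋) with only finitely many nonzero terms, ‖(e^{inτδ} u_n)_{n∈ℤ}‖_{X^{s,b}_τ} ≤ C ‖(u_n)‖_{X^{s,b}_τ}, where e^{inτδ} u_n denotes multiplication of u_n by the unimodular scalar e^{inτδ}. -/
noncomputable section

open MeasureTheory Complex Filter Topology AddCircle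
open scoped ENNReal

abbrev Torus := AddCircle (2 * Real.pi)

instance : Fact (0 < 2 * Real.pi) := ⟨by positivity⟩

/-- Japanese bracket `⟨x⟩ = (1+|x|²)^{1/2}`. -/
def jbr (x : ℝ) : ℝ := Real.sqrt (1 + x ^ 2)

/-- The Sobolev `H^s` norm on the torus, via Fourier coefficients. -/
def hsNorm (s : ℝ) (f : Torus → ℂ) : ℝ :=
  Real.sqrt (∑' k : ℤ, jbr k ^ (2 * s) * ‖fourierCoeff f k‖ ^ 2)

/-- Membership in `H^s(𝕋)` (as a function): square integrable with finite `H^s` norm. -/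
def InHs (s : ℝ) (f : Torus → ℂ) : Prop :=
  MemLp f 2 haarAddCircle ∧ Summable fun k : ℤ => jbr k ^ (2 * s) * ‖fourierCoeff f k‖ ^ 2

/-- The frequency cutoff `Π_τ`, keeping the Fourier modes `|k| ≤ τ^{-1/2}`. -/
def projC (τ : ℝ) (f : Torus → ℂ) : Torus → ℂ := fun x =>
  ∑' k : ℤ, if |(k : ℝ)| ≤ τ ^ (-(1 : ℝ) / 2) then fourierCoeff f k * fourier k x else 0

/-- The free Schrödinger group `e^{it∂_x²}`, given by the Fourier multiplier `e^{-itk²}`. -/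
def schrod (t : ℝ) (f : Torus → ℂ) : Torus → ℂ := fun x =>
  ∑' k : ℤ, Complex.exp (-Complex.I * t * (k : ℂ) ^ 2) * fourierCoeff f k * fourier k x

/-- Continuity on `I` with values in `L²(𝕋)`. -/
def ContL2On (I : Set ℝ) (u : ℝ → Torus → ℂ) : Prop :=
  (∀ t ∈ I, MemLp (u t) 2 haarAddCircle) ∧
  ∀ t ∈ I, Tendsto (fun t' => eLpNorm (u t' - u t) 2 haarAddCircle) (nhdsWithin t I) (nhds 0)

/-- Continuity on `I` with values in `H^s(𝕋)`. -/
def ContHsOn (s : ℝ) (I : Set ℝ) (u : ℝ → Torus → ℂ) : Prop :=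
  (∀ t ∈ I, InHs s (u t)) ∧
  ∀ t ∈ I, Tendsto (fun t' => hsNorm s (u t' - u t)) (nhdsWithin t I) (nhds 0)

/-- The cubic nonlinearity `|f|² f` (pointwise). -/
def cubic (f : Torus → ℂ) : Torus → ℂ := fun x => (‖f x‖ : ℂ) ^ 2 * f x

/-- The filtered cubic nonlinearity `Π_τ(|Π_τ f|² Π_τ f)`. -/
def projCubic (τ : ℝ) (f : Torus → ℂ) : Torus → ℂ := projC τ (cubic (projC τ f))

/-- `v` is the (global-in-time) mild solution of the projected equation
`i∂_t v = -∂_x² v - μ Π_τ(|Π_τ v|² Π_τ v)`, `v(0) = Π_τ u₀`. -/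
def IsProjSolution (μ τ : ℝ) (u₀ : Torus → ℂ) (v : ℝ → Torus → ℂ) : Prop :=
  ContL2On Set.univ v ∧
  ∀ t : ℝ, ∀ x : Torus,
    v t x = schrod t (projC τ u₀) x
      + Complex.I * μ * ∫ s in (0 : ℝ)..t, schrod (t - s) (projCubic τ (v s)) x

/-- The cubic NLS `i∂_t u = -∂_x² u - μ |u|² u` holds in the sense of space-time
distributions on `(0,T) × 𝕋` (tested against `ψ(t) e^{-ikx}`). -/
def DistribSolOn (μ T : ℝ) (u : ℝ → Torus → ℂ) : Prop :=
  ∀ k : ℤ, ∀ ψ : ℝ → ℂ, ContDiff ℝ (⊤ : ℕ∞) ψ → tsupport ψ ⊆ Set.Ioo 0 T →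
    -Complex.I * ∫ t : ℝ, deriv ψ t * fourierCoeff (u t) k
      = (k : ℂ) ^ 2 * ∫ t : ℝ, ψ t * fourierCoeff (u t) k
        - (μ : ℂ) * ∫ t : ℝ, ψ t * fourierCoeff (cubic (u t)) k

/-- `u ∈ L⁴((0,T) × 𝕋)`. -/
def SpaceTimeL4 (T : ℝ) (u : ℝ → Torus → ℂ) : Prop :=
  MemLp (fun p : ℝ × Torus => u p.1 p.2) 4
    ((volume.restrict (Set.Ioo 0 T)).prod haarAddCircle)

/-- Space-time Fourier transform `ṽ(σ,k)` of `v : ℝ × 𝕋 → ℂ`. -/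
def stFT (v : ℝ → Torus → ℂ) (σ : ℝ) (k : ℤ) : ℂ :=
  ∫ t : ℝ, Complex.exp (-Complex.I * σ * t) * fourierCoeff (v t) k

/-- The (continuous) Bourgain `X^{s,b}` norm, valued in `ℝ≥0∞`. -/
def XcNorm (s b : ℝ) (v : ℝ → Torus → ℂ) : ℝ≥0∞ :=
  (∫⁻ σ : ℝ, ∑' k : ℤ,
      ENNReal.ofReal ((1 + |(k : ℝ)|) ^ (2 * s) * (1 + |σ + (k : ℝ) ^ 2|) ^ (2 * b)
        * ‖stFT v σ k‖ ^ 2)) ^ (1 / 2 : ℝ)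

/-- The restriction norm `‖u‖_{X^{s,b}(T)}` is bounded by `M`: some extension of `u`
from `(0,T)` has `X^{s,b}` norm at most `M`. -/
def XresBounded (s b T : ℝ) (u : ℝ → Torus → ℂ) (M : ℝ≥0∞) : Prop :=
  ∃ v : ℝ → Torus → ℂ, (∀ t ∈ Set.Ioo 0 T, v t = u t) ∧ XcNorm s b v ≤ M

/-- `u` is a Bourgain-class solution of cubic NLS on `[0,T]` with datum `u₀`. -/
def IsNLSSolution (μ T : ℝ) (u₀ : Torus → ℂ) (u : ℝ → Torus → ℂ) : Prop :=
  ContL2On (Set.Icc 0 T) u ∧ SpaceTimeL4 T u ∧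
  (∃ b ∈ Set.Ioo (1 / 2 : ℝ) (5 / 8 : ℝ), ∃ v : ℝ → Torus → ℂ,
      (∀ t ∈ Set.Ioo 0 T, v t = u t) ∧ XcNorm 0 b v < ⊤) ∧
  u 0 = u₀ ∧ DistribSolOn μ T u

/-- One step of the pointwise nonlinear flow `e^{iμτ|Π_τ f|²} Π_τ f`. -/
def lieFlow (μ τ : ℝ) (f : Torus → ℂ) : Torus → ℂ := fun x =>
  Complex.exp (Complex.I * μ * τ * (‖projC τ f x‖ : ℂ) ^ 2) * projC τ f x

/-- The filtered Lie splitting scheme `u⁰ = Π_τ u₀`,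
`u^{n+1} = e^{iτ∂_x²} Π_τ (e^{iμτ|Π_τ uⁿ|²} Π_τ uⁿ)`. -/
def lieScheme (μ τ : ℝ) (u₀ : Torus → ℂ) : ℕ → Torus → ℂ
  | 0 => projC τ u₀
  | n + 1 => schrod τ (projC τ (lieFlow μ τ (lieScheme μ τ u₀ n)))

/-- `d_τ(σ) = (e^{iτσ}-1)/τ`. -/
def dtau (τ σ : ℝ) : ℂ := (Complex.exp (Complex.I * τ * σ) - 1) / τ

/-- The discrete Bourgain `X^{s,b}_τ` norm of a sequence of functions on the torus. -/
def XdNorm (τ s b : ℝ) (u : ℤ → Torus → ℂ) : ℝ :=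
  Real.sqrt (∫ σ in Set.Ioc (-(Real.pi / τ)) (Real.pi / τ),
    ∑' k : ℤ, jbr k ^ (2 * s) * jbr ‖dtau τ (σ - (k : ℝ) ^ 2)‖ ^ (2 * b) *
      ‖(τ : ℂ) * ∑' m : ℤ, fourierCoeff (u m) k * Complex.exp (Complex.I * m * τ * σ)‖ ^ 2)

/-- The discrete space-time Lebesgue norm `‖(u_n)‖_{ℓ^p_τ L^q}`. -/
def lpLqNorm (τ p q : ℝ) (u : ℤ → Torus → ℂ) : ℝ :=
  (τ * ∑' n : ℤ, (eLpNorm (u n) (ENNReal.ofReal q) haarAddCircle).toReal ^ p) ^ (1 / p)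

lemma jbr_pos' (x : ℝ) : 0 < jbr x := Real.sqrt_pos.mpr (by positivity)

lemma jbr_one_le (x : ℝ) : 1 ≤ jbr x := by
  unfold jbr
  exact Real.one_le_sqrt.mpr (by nlinarith [sq_nonneg x])

lemma jbr_le_six {a c : ℝ} (ha : 0 ≤ a) (h : a ≤ c + 4) : jbr a ≤ 6 * jbr c := by
  unfold jbr
  rw [show (6 : ℝ) = Real.sqrt 36 by rw [show (36 : ℝ) = 6 ^ 2 by norm_num]; simp,
    ← Real.sqrt_mul (by norm_num)]
  apply Real.sqrt_le_sqrt
  nlinarith [sq_nonneg (c - 4), pow_le_pow_left₀ ha h 2]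

lemma jbr_rpow_le {a c : ℝ} (b : ℝ) (ha : 0 ≤ a) (hc : 0 ≤ c) (h : a ≤ c + 4) (h' : c ≤ a + 4) :
    jbr a ^ b ≤ 6 ^ |b| * jbr c ^ b := by
  have pa := jbr_pos' a
  have pc := jbr_pos' c
  rcases le_total 0 b with hb | hb
  · rw [abs_of_nonneg hb, ← Real.mul_rpow (by norm_num) pc.le]
    exact Real.rpow_le_rpow pa.le (jbr_le_six ha h) hb
  · rw [abs_of_nonpos hb]
    have := Real.rpow_le_rpow pc.le (jbr_le_six hc h') (neg_nonneg.mpr hb)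
    rw [Real.mul_rpow (by norm_num) pa.le, Real.rpow_neg pc.le, Real.rpow_neg pa.le] at this
    have h1 : 0 < jbr a ^ b := Real.rpow_pos_of_pos pa b
    have h2 : 0 < jbr c ^ b := Real.rpow_pos_of_pos pc b
    rw [← div_eq_mul_inv, le_div_iff₀ h1, inv_mul_le_iff₀ h2] at this
    linarith

lemma dtau_sub {τ : ℝ} (hτ : 0 < τ) (x y : ℝ) : ‖dtau τ x‖ ≤ ‖dtau τ y‖ + |x - y| := by
  have h : ‖dtau τ x - dtau τ y‖ ≤ |x - y| := by
    have e : dtau τ x - dtau τ y =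
        Complex.exp (Complex.I * (τ * y : ℝ)) *
          (Complex.exp (Complex.I * (τ * (x - y) : ℝ)) - 1) / τ := by
      unfold dtau
      rw [mul_sub, ← Complex.exp_add, mul_one, ← sub_div]
      congr 1
      rw [sub_sub_sub_cancel_right]
      congr 2 <;> push_cast <;> ring
    rw [e, norm_div, norm_mul, mul_comm Complex.I ((τ * y : ℝ) : ℂ), Complex.norm_exp_ofReal_mul_I,
      one_mul, Complex.norm_real, Real.norm_of_nonneg hτ.le, div_le_iff₀ hτ]
    refine (Real.norm_exp_I_mul_ofReal_sub_one_le).trans ?_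
    rw [Real.norm_eq_abs, abs_mul, abs_of_pos hτ, mul_comm]
  have := norm_sub_norm_le (dtau τ x) (dtau τ y)
  linarith

lemma dtau_norm_le {τ : ℝ} (hτ : 0 < τ) (x : ℝ) : ‖dtau τ x‖ ≤ 2 / τ := by
  unfold dtau
  rw [norm_div, Complex.norm_real, Real.norm_of_nonneg hτ.le]
  gcongr
  refine (norm_sub_le _ _).trans ?_
  rw [show Complex.I * τ * x = (τ * x : ℝ) * Complex.I by push_cast; ring,
    Complex.norm_exp_ofReal_mul_I]
  norm_num

lemma jbr_rpow_bdd (b M x : ℝ) (hx : 0 ≤ x) (hM : x ≤ M) : jbr x ^ b ≤ jbr M ^ |b| := by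
  have h1 := jbr_one_le x
  have hxM : jbr x ≤ jbr M := Real.sqrt_le_sqrt (by nlinarith)
  calc jbr x ^ b ≤ jbr x ^ |b| := Real.rpow_le_rpow_of_exponent_le h1 (le_abs_self b)
    _ ≤ jbr M ^ |b| := Real.rpow_le_rpow (jbr_pos' x).le hxM (abs_nonneg b)

lemma fourierCoeff_zero_fun (k : ℤ) : fourierCoeff (0 : Torus → ℂ) k = 0 := by
  simp [fourierCoeff]

/-- The summand in the discrete Bourgain norm. -/
def Gk (τ s b : ℝ) (u : ℤ → Torus → ℂ) (k : ℤ) (σ : ℝ) : ℝ :=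
  jbr k ^ (2 * s) * jbr ‖dtau τ (σ - (k : ℝ) ^ 2)‖ ^ (2 * b) *
      ‖(τ : ℂ) * ∑' m : ℤ, fourierCoeff (u m) k * Complex.exp (Complex.I * m * τ * σ)‖ ^ 2

lemma Gk_nonneg (τ s b : ℝ) (u : ℤ → Torus → ℂ) (k : ℤ) (σ : ℝ) : 0 ≤ Gk τ s b u k σ := by
  have := (jbr_pos' (k : ℝ)).le
  have := (jbr_pos' ‖dtau τ (σ - (k : ℝ) ^ 2)‖).le
  unfold Gk
  positivity

lemma inner_eq (u : ℤ → Torus → ℂ) (hf : {n : ℤ | u n ≠ 0}.Finite) (τ σ : ℝ) (k : ℤ) :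
    ∑' m : ℤ, fourierCoeff (u m) k * Complex.exp (Complex.I * m * τ * σ) =
    ∑ m ∈ hf.toFinset, fourierCoeff (u m) k * Complex.exp (Complex.I * m * τ * σ) := by
  apply tsum_eq_sum
  intro m hm
  have : u m = 0 := by simpa using hm
  rw [this, fourierCoeff_zero_fun, zero_mul]

lemma Gk_cont {τ : ℝ} (s b : ℝ) (u : ℤ → Torus → ℂ)
    (hf : {n : ℤ | u n ≠ 0}.Finite) (k : ℤ) : Continuous (Gk τ s b u k) := by
  have h1 : Continuous fun σ : ℝ => jbr ‖dtau τ (σ - (k : ℝ) ^ 2)‖ := by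
    unfold jbr dtau
    fun_prop
  unfold Gk
  simp_rw [inner_eq u hf]
  refine (continuous_const.mul (h1.rpow_const fun x => Or.inl (jbr_pos' _).ne')).mul ?_
  fun_prop

lemma Gk_bound {τ : ℝ} (hτ : 0 < τ) (s b : ℝ) (u : ℤ → Torus → ℂ)
    (hu : ∀ n, InHs s (u n)) (hf : {n : ℤ | u n ≠ 0}.Finite) :
    ∃ M : ℤ → ℝ, Summable M ∧ ∀ k σ, Gk τ s b u k σ ≤ M k := by
  refine ⟨fun k => (jbr (2 / τ) ^ |2 * b| * τ ^ 2 * hf.toFinset.card) *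
    ∑ m ∈ hf.toFinset, jbr k ^ (2 * s) * ‖fourierCoeff (u m) k‖ ^ 2,
    (summable_sum fun m _ => (hu m).2).mul_left _, fun k σ => ?_⟩
  have hk := (jbr_pos' (k : ℝ)).le
  have hd := (jbr_pos' ‖dtau τ (σ - (k : ℝ) ^ 2)‖).le
  have h2 := (jbr_pos' (2 / τ)).le
  unfold Gk
  rw [inner_eq u hf, norm_mul, mul_pow, Complex.norm_real, Real.norm_of_nonneg hτ.le]
  have hs : ‖∑ m ∈ hf.toFinset, fourierCoeff (u m) k * Complex.exp (Complex.I * m * τ * σ)‖ ^ 2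
      ≤ hf.toFinset.card * ∑ m ∈ hf.toFinset, ‖fourierCoeff (u m) k‖ ^ 2 := by
    refine le_trans ?_ sq_sum_le_card_mul_sum_sq
    gcongr
    refine (norm_sum_le _ _).trans (Finset.sum_le_sum fun m _ => ?_)
    rw [norm_mul, show Complex.I * m * τ * σ = (m * τ * σ : ℝ) * Complex.I by push_cast; ring,
      Complex.norm_exp_ofReal_mul_I, mul_one]
  have hw := jbr_rpow_bdd (2 * b) (2 / τ) _ (norm_nonneg _) (dtau_norm_le hτ (σ - (k : ℝ) ^ 2))
  calc _ ≤ jbr k ^ (2 * s) * jbr (2 / τ) ^ |2 * b| *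
        (τ ^ 2 * (hf.toFinset.card * ∑ m ∈ hf.toFinset, ‖fourierCoeff (u m) k‖ ^ 2)) := by
        gcongr
    _ = _ := by simp only [← Finset.mul_sum]; ring

lemma Gk_summable {τ : ℝ} (hτ : 0 < τ) (s b : ℝ) (u : ℤ → Torus → ℂ)
    (hu : ∀ n, InHs s (u n)) (hf : {n : ℤ | u n ≠ 0}.Finite) (σ : ℝ) :
    Summable fun k => Gk τ s b u k σ := by
  obtain ⟨M, hM, h⟩ := Gk_bound hτ s b u hu hf
  exact Summable.of_nonneg_of_le (fun k => Gk_nonneg τ s b u k σ) (fun k => h k σ) hM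

lemma G_cont {τ : ℝ} (hτ : 0 < τ) (s b : ℝ) (u : ℤ → Torus → ℂ)
    (hu : ∀ n, InHs s (u n)) (hf : {n : ℤ | u n ≠ 0}.Finite) :
    Continuous fun σ => ∑' k, Gk τ s b u k σ := by
  obtain ⟨M, hM, h⟩ := Gk_bound hτ s b u hu hf
  refine continuous_tsum (fun k => Gk_cont s b u hf k) hM fun k σ => ?_
  rw [Real.norm_of_nonneg (Gk_nonneg τ s b u k σ)]
  exact h k σ

lemma Gk_periodic {τ : ℝ} (hτ : 0 < τ) (s b : ℝ) (u : ℤ → Torus → ℂ) (k : ℤ) (σ : ℝ) :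
    Gk τ s b u k (σ + 2 * Real.pi / τ) = Gk τ s b u k σ := by
  have hτ' : (τ : ℂ) ≠ 0 := by exact_mod_cast hτ.ne'
  have e1 : dtau τ (σ + 2 * Real.pi / τ - (k : ℝ) ^ 2) = dtau τ (σ - (k : ℝ) ^ 2) := by
    unfold dtau
    congr 2
    rw [Complex.exp_eq_exp_iff_exists_int]
    refine ⟨1, ?_⟩
    push_cast
    field_simp
    ring
  have e2 : ∀ m : ℤ, Complex.exp (Complex.I * m * τ * (σ + 2 * Real.pi / τ : ℝ)) =
      Complex.exp (Complex.I * m * τ * σ) := by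
    intro m
    rw [Complex.exp_eq_exp_iff_exists_int]
    refine ⟨m, ?_⟩
    push_cast
    field_simp
  unfold Gk
  simp_rw [e1, e2]

lemma Gk_mod {τ : ℝ} (hτ : 0 < τ) (s b : ℝ) (u : ℤ → Torus → ℂ) (δ : ℝ) (hδ : |δ| ≤ 4)
    (k : ℤ) (σ : ℝ) :
    Gk τ s b (fun n x => Complex.exp (Complex.I * (n : ℂ) * (τ : ℂ) * (δ : ℂ)) * u n x) k σ
      ≤ 6 ^ |2 * b| * Gk τ s b u k (σ + δ) := by
  have hk := (jbr_pos' (k : ℝ)).le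
  have e : ∀ m : ℤ, fourierCoeff
      (fun x => Complex.exp (Complex.I * (m : ℂ) * (τ : ℂ) * (δ : ℂ)) * u m x) k *
        Complex.exp (Complex.I * m * τ * σ) =
      fourierCoeff (u m) k * Complex.exp (Complex.I * m * τ * (σ + δ : ℝ)) := by
    intro m
    rw [fourierCoeff.const_mul]
    rw [mul_comm (Complex.exp _) (fourierCoeff (u m) k), mul_assoc, ← Complex.exp_add]
    congr 2
    push_cast
    ring
  unfold Gk
  simp_rw [e]
  have h1 := dtau_sub hτ (σ - (k : ℝ) ^ 2) (σ + δ - (k : ℝ) ^ 2)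
  have h2 := dtau_sub hτ (σ + δ - (k : ℝ) ^ 2) (σ - (k : ℝ) ^ 2)
  rw [show σ - (k : ℝ) ^ 2 - (σ + δ - (k : ℝ) ^ 2) = -δ by ring, abs_neg] at h1
  rw [show σ + δ - (k : ℝ) ^ 2 - (σ - (k : ℝ) ^ 2) = δ by ring] at h2
  have hw := jbr_rpow_le (2 * b) (norm_nonneg _) (norm_nonneg _)
    (h1.trans (by gcongr)) (h2.trans (by gcongr))
  calc _ ≤ jbr k ^ (2 * s) * (6 ^ |2 * b| * jbr ‖dtau τ (σ + δ - (k : ℝ) ^ 2)‖ ^ (2 * b)) *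
      ‖(τ : ℂ) * ∑' m : ℤ, fourierCoeff (u m) k *
        Complex.exp (Complex.I * m * τ * (σ + δ : ℝ))‖ ^ 2 := by gcongr
    _ = _ := by ring

/-- Uniform boundedness of modulation by `e^{inτδ}`, `δ ∈ [-4,4]`,
on the discrete Bourgain spaces. -/
theorem discrete_bourgain_modulation (s b : ℝ) :
    ∃ C > (0 : ℝ), ∀ τ ∈ Set.Ioc (0 : ℝ) 1, ∀ δ ∈ Set.Icc (-4 : ℝ) 4,
      ∀ u : ℤ → Torus → ℂ, (∀ n, InHs s (u n)) → {n : ℤ | u n ≠ 0}.Finite →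
      XdNorm τ s b (fun n x => Complex.exp (Complex.I * (n : ℂ) * (τ : ℂ) * (δ : ℂ)) * u n x)
        ≤ C * XdNorm τ s b u := by
  refine ⟨Real.sqrt (6 ^ |2 * b|), by positivity, ?_⟩
  intro τ hτ δ hδ u hu hf
  have hτ0 := hτ.1
  have hδ' : |δ| ≤ 4 := abs_le.mpr hδ
  have hle : -(Real.pi / τ) ≤ Real.pi / τ := by
    have : 0 < Real.pi / τ := by positivity
    linarith
  rw [XdNorm, XdNorm, ← Real.sqrt_mul (by positivity)]
  apply Real.sqrt_le_sqrt
  change ∫ σ in Set.Ioc (-(Real.pi / τ)) (Real.pi / τ), ∑' k : ℤ, Gk τ s b _ k σ ≤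
    6 ^ |2 * b| * ∫ σ in Set.Ioc (-(Real.pi / τ)) (Real.pi / τ), ∑' k : ℤ, Gk τ s b u k σ
  have hG := G_cont hτ0 s b u hu hf
  have hper : Function.Periodic (fun σ => ∑' k : ℤ, Gk τ s b u k σ) (2 * Real.pi / τ) := by
    intro σ
    simp only [Gk_periodic hτ0]
  have hshift : ∫ σ in Set.Ioc (-(Real.pi / τ)) (Real.pi / τ), ∑' k : ℤ, Gk τ s b u k σ =
      ∫ σ in Set.Ioc (-(Real.pi / τ)) (Real.pi / τ), ∑' k : ℤ, Gk τ s b u k (σ + δ) := by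
    rw [← intervalIntegral.integral_of_le hle, ← intervalIntegral.integral_of_le hle,
      intervalIntegral.integral_comp_add_right (fun σ => ∑' k : ℤ, Gk τ s b u k σ) δ]
    have := hper.intervalIntegral_add_eq (-(Real.pi / τ)) (-(Real.pi / τ) + δ)
    rw [show -(Real.pi / τ) + 2 * Real.pi / τ = Real.pi / τ by ring,
      show -(Real.pi / τ) + δ + 2 * Real.pi / τ = Real.pi / τ + δ by ring] at this
    exact this
  rw [hshift, ← integral_const_mul]
  have hGs : ∀ σ, Summable fun k => 6 ^ |2 * b| * Gk τ s b u k (σ + δ) := fun σ =>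
    (Gk_summable hτ0 s b u hu hf (σ + δ)).mul_left _
  refine integral_mono_of_nonneg (Eventually.of_forall fun σ =>
    tsum_nonneg fun k => Gk_nonneg _ _ _ _ _ _) ?_ (Eventually.of_forall fun σ => ?_)
  · have hc : Continuous fun σ => (6 : ℝ) ^ |2 * b| * ∑' k : ℤ, Gk τ s b u k (σ + δ) :=
      continuous_const.mul (hG.comp (continuous_id.add continuous_const))
    exact (hc.integrableOn_Icc).mono_set Set.Ioc_subset_Icc_self
  · change ∑' k : ℤ, Gk τ s b _ k σ ≤ 6 ^ |2 * b| * ∑' k : ℤ, Gk τ s b u k (σ + δ)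
    rw [← tsum_mul_left]
    refine Summable.tsum_le_tsum (fun k => Gk_mod hτ0 s b u δ hδ' k σ) ?_ (hGs σ)
    exact Summable.of_nonneg_of_le (fun k => Gk_nonneg _ _ _ _ _ _)
      (fun k => Gk_mod hτ0 s b u δ hδ' k σ) (hGs σ)
end
end

section
/- Let η : ℝ → ℝ be smooth and compactly supported. For every s ∈ ℝ and b ∈ ℝ there exists C > 0 (depending on η, s, b) such that for every τ ∈ (0,1] and every f ∈ H^s(𝕋), the sequence (η(nτ) e^{inτ∂_x²} f)_{n∈ℤ} (which has only finitely many nonzero terms) satisfies ‖(η(nτ) e^{inτ∂_x²} f)_n‖_{X^{s,b}_τ} ≤ C ‖f‖_{H^s}. -/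
noncomputable section

open MeasureTheory Complex Filter Topology AddCircle
open scoped ENNReal

/-- The discrete Fourier sum. -/
def dS (τ : ℝ) (h : ℝ → ℝ) (θ : ℝ) : ℂ :=
  (τ : ℂ) * ∑' m : ℤ, (h ((m : ℝ) * τ) : ℂ) * Complex.exp (Complex.I * m * τ * θ)

lemma dS_eq_sum {τ R : ℝ} (hτ : 0 < τ) {h : ℝ → ℝ}
    (hs : ∀ x, R < |x| → h x = 0) (θ : ℝ) :
    ∀ m ∉ Finset.Icc ⌈-(R / τ)⌉ ⌊R / τ⌋,
      (h ((m : ℝ) * τ) : ℂ) * Complex.exp (Complex.I * m * τ * θ) = 0 := by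
  intro m hm
  have : h ((m : ℝ) * τ) = 0 := by
    apply hs
    by_contra hc
    push Not at hc
    apply hm
    rw [abs_le] at hc
    rw [Finset.mem_Icc, Int.ceil_le, Int.le_floor, le_div_iff₀ hτ, ← neg_div, div_le_iff₀ hτ]
    exact hc
  simp [this]

lemma dS_norm_exp (m : ℤ) (τ θ : ℝ) : ‖Complex.exp (Complex.I * m * τ * θ)‖ = 1 := by
  have : Complex.I * m * τ * θ = ((m * τ * θ : ℝ) : ℂ) * Complex.I := by push_cast; ring
  rw [this, Complex.norm_exp_ofReal_mul_I]

lemma dS_bound {τ R M : ℝ} (hτ : 0 < τ) (hτ1 : τ ≤ 1) (hR : 0 ≤ R) {h : ℝ → ℝ}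
    (hs : ∀ x, R < |x| → h x = 0) (hM : ∀ x, |h x| ≤ M) (θ : ℝ) :
    ‖dS τ h θ‖ ≤ M * (2 * R + 1) := by
  have hM0 : 0 ≤ M := (abs_nonneg _).trans (hM 0)
  unfold dS
  rw [tsum_eq_sum (dS_eq_sum hτ hs θ), norm_mul, Complex.norm_real, Real.norm_of_nonneg hτ.le]
  have h1 : ‖∑ m ∈ Finset.Icc ⌈-(R / τ)⌉ ⌊R / τ⌋,
      (h ((m : ℝ) * τ) : ℂ) * Complex.exp (Complex.I * m * τ * θ)‖
      ≤ ∑ m ∈ Finset.Icc ⌈-(R / τ)⌉ ⌊R / τ⌋, M := by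
    apply norm_sum_le_of_le
    intro m _
    rw [norm_mul, dS_norm_exp, mul_one, Complex.norm_real]
    exact hM _
  rw [Finset.sum_const, Int.card_Icc, nsmul_eq_mul] at h1
  have hd : 0 ≤ R / τ := by positivity
  have h2 : (((⌊R / τ⌋ + 1 - ⌈-(R / τ)⌉).toNat : ℕ) : ℝ) ≤ 2 * (R / τ) + 1 := by
    have ha : ⌈-(R / τ)⌉ ≤ 0 := by rw [Int.ceil_le]; simpa using hd
    have hb : 0 ≤ ⌊R / τ⌋ := Int.floor_nonneg.2 hd
    have hc : (0 : ℤ) ≤ ⌊R / τ⌋ + 1 - ⌈-(R / τ)⌉ := by omega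
    have : (((⌊R / τ⌋ + 1 - ⌈-(R / τ)⌉).toNat : ℕ) : ℝ)
        = ((⌊R / τ⌋ + 1 - ⌈-(R / τ)⌉ : ℤ) : ℝ) := by
      exact_mod_cast congrArg (fun z : ℤ => (z : ℝ)) (Int.toNat_of_nonneg hc)
    rw [this]
    push_cast
    have := Int.floor_le (R / τ)
    have := Int.le_ceil (-(R / τ))
    linarith
  calc _ ≤ τ * ((2 * (R / τ) + 1) * M) := by gcongr; exact h1.trans (by gcongr)
    _ = M * (2 * R + τ) := by field_simp
    _ ≤ _ := by gcongr

lemma dS_parts {τ R : ℝ} (hτ : 0 < τ) {h : ℝ → ℝ}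
    (hs : ∀ x, R < |x| → h x = 0) (θ : ℝ) :
    dtau τ θ * dS τ h θ = dS τ (fun x => (h (x - τ) - h x) / τ) θ := by
  have hsum : Summable fun m : ℤ =>
      (h ((m : ℝ) * τ) : ℂ) * Complex.exp (Complex.I * m * τ * θ) :=
    summable_of_ne_finset_zero (dS_eq_sum hτ hs θ)
  set F : ℤ → ℂ := fun m => (h ((m : ℝ) * τ) : ℂ) * Complex.exp (Complex.I * m * τ * θ) with hF
  set e := Complex.exp (Complex.I * τ * θ) with he
  have hτc : (τ : ℂ) ≠ 0 := by exact_mod_cast hτ.ne'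
  have hsh : Summable fun m : ℤ => F (m - 1) :=
    (Equiv.subRight (1 : ℤ)).summable_iff.2 hsum
  have hsh2 : ∑' m : ℤ, F (m - 1) = ∑' m, F m := (Equiv.subRight (1 : ℤ)).tsum_eq F
  have hterm : ∀ m : ℤ, (((h ((m : ℝ) * τ - τ) - h ((m : ℝ) * τ)) / τ : ℝ) : ℂ)
      * Complex.exp (Complex.I * m * τ * θ) = (e * F (m - 1) - F m) / τ := by
    intro m
    have h1 : ((m - 1 : ℤ) : ℝ) * τ = m * τ - τ := by push_cast; ring
    have h2 : e * Complex.exp (Complex.I * ((m - 1 : ℤ) : ℂ) * τ * θ)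
        = Complex.exp (Complex.I * m * τ * θ) := by
      rw [he, ← Complex.exp_add]; congr 1; push_cast; ring
    simp only [hF, h1]
    rw [← h2]
    push_cast
    ring
  unfold dS dtau
  rw [tsum_congr hterm, tsum_div_const, (hsh.mul_left e).tsum_sub hsum, tsum_mul_left, hsh2]
  change (e - 1) / (τ : ℂ) * ((τ : ℂ) * ∑' m, F m) = _
  generalize ∑' m, F m = T
  field_simp

lemma dS_decay (N : ℕ) : ∀ (g : ℕ → ℝ → ℝ) (R M τ : ℝ), 0 < τ → τ ≤ 1 → 0 ≤ R →
    (∀ x, R < |x| → g 0 x = 0) → (∀ j x, HasDerivAt (g j) (g (j + 1) x) x) →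
    (∀ x, |g N x| ≤ M) → ∀ θ, ‖dtau τ θ‖ ^ N * ‖dS τ (g 0) θ‖ ≤ M * (2 * (R + N) + 1) := by
  induction N with
  | zero =>
    intro g R M τ hτ hτ1 hR hs _ hM θ
    simpa using dS_bound hτ hτ1 hR hs hM θ
  | succ N ih =>
    intro g R M τ hτ hτ1 hR hs hd hM θ
    have key := ih (fun j x => (g j (x - τ) - g j x) / τ) (R + 1) M τ hτ hτ1 (by linarith)
      (by
        intro x hx
        have h1 := abs_sub_abs_le_abs_sub x τ
        rw [abs_of_pos hτ] at h1
        simp [hs x (by linarith), hs (x - τ) (by linarith)])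
      (by
        intro j x
        exact (((hd j (x - τ)).comp_sub_const x τ).sub (hd j x)).div_const τ)
      (by
        intro x
        have := Convex.norm_image_sub_le_of_norm_hasDerivWithin_le (f := g N) (f' := g (N + 1))
          (s := Set.univ) (C := M) (x := x) (y := x - τ)
          (fun y _ => (hd N y).hasDerivWithinAt) (fun y _ => hM y) convex_univ trivial trivial
        rw [Real.norm_eq_abs, Real.norm_eq_abs] at this
        rw [abs_div, abs_of_pos hτ, div_le_iff₀ hτ]
        simpa [abs_of_pos hτ] using this)
      θ
    rw [← dS_parts hτ hs θ, norm_mul] at key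
    rw [pow_succ, mul_assoc]
    refine key.trans (le_of_eq ?_)
    push_cast
    ring

/-- The weighted density. -/
def dG (τ b : ℝ) (η : ℝ → ℝ) (θ : ℝ) : ℝ := jbr ‖dtau τ θ‖ ^ (2 * b) * ‖dS τ η θ‖ ^ 2

lemma dG_nonneg (τ b : ℝ) (η : ℝ → ℝ) (θ : ℝ) : 0 ≤ dG τ b η θ :=
  mul_nonneg (Real.rpow_nonneg (by linarith [jbr_one_le ‖dtau τ θ‖]) _) (by positivity)

lemma dG_decay (η : ℝ → ℝ) (hη : ContDiff ℝ (⊤ : ℕ∞) η) (hηc : HasCompactSupport η) (b : ℝ) :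
    ∃ C > 0, ∀ τ ∈ Set.Ioc (0 : ℝ) 1, ∀ θ : ℝ, dG τ b η θ * (1 + ‖dtau τ θ‖ ^ 2) ≤ C := by
  obtain ⟨R, hR0, hR⟩ : ∃ R, 0 ≤ R ∧ ∀ x, R < |x| → η x = 0 := by
    obtain ⟨R, hR⟩ := hηc.isCompact.isBounded.subset_closedBall (0 : ℝ)
    refine ⟨max R 0, le_max_right _ _, fun x hx => ?_⟩
    by_contra hne
    have := hR (subset_tsupport η hne)
    rw [Metric.mem_closedBall, dist_zero_right, Real.norm_eq_abs] at this
    exact absurd (this.trans (le_max_left R 0)) (not_le.2 hx)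
  have hd : ∀ j x, HasDerivAt (iteratedDeriv j η) (iteratedDeriv (j + 1) η x) x := by
    intro j x
    rw [iteratedDeriv_succ]
    exact ((hη.differentiable_iteratedDeriv j (by exact_mod_cast WithTop.coe_lt_top _)) x).hasDerivAt
  have hB : ∀ j, ∃ M, ∀ x, |iteratedDeriv j η x| ≤ M := by
    intro j
    have hc : Continuous (iteratedDeriv j η) :=
      hη.continuous_iteratedDeriv j (by exact_mod_cast le_top)
    have hcs : HasCompactSupport (iteratedDeriv j η) := by
      induction j with
      | zero => simpa using hηc
      | succ j ih =>
        rw [iteratedDeriv_succ]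
        exact (ih (hη.continuous_iteratedDeriv j (by exact_mod_cast le_top))).deriv
    exact hcs.exists_bound_of_continuous hc
  have hdec : ∀ N : ℕ, ∃ C, ∀ τ ∈ Set.Ioc (0 : ℝ) 1, ∀ θ : ℝ,
      ‖dtau τ θ‖ ^ N * ‖dS τ η θ‖ ≤ C := by
    intro N
    obtain ⟨M, hM⟩ := hB N
    refine ⟨M * (2 * (R + N) + 1), fun τ hτ θ => ?_⟩
    have := dS_decay N (fun j => iteratedDeriv j η) R M τ hτ.1 hτ.2 hR0
      (by simpa using hR) hd hM θ
    simpa using this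
  obtain ⟨n, hn⟩ := exists_nat_ge b
  obtain ⟨C0, h0⟩ := hdec 0
  obtain ⟨C1, h1⟩ := hdec (n + 1)
  refine ⟨2 ^ n * (C0 ^ 2 + C1 ^ 2) + 1, by positivity, fun τ hτ θ => ?_⟩
  have h0 := h0 τ hτ θ
  have h1 := h1 τ hτ θ
  unfold dG
  set x := ‖dtau τ θ‖ with hx
  set y := ‖dS τ η θ‖ with hy
  have hx0 : 0 ≤ x := norm_nonneg _
  have hy0 : 0 ≤ y := norm_nonneg _
  have hj : jbr x ^ (2 * b) ≤ (1 + x ^ 2) ^ n := by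
    calc jbr x ^ (2 * b) ≤ jbr x ^ (2 * (n : ℝ)) :=
          Real.rpow_le_rpow_of_exponent_le (jbr_one_le x) (by linarith)
      _ = (jbr x ^ 2) ^ n := by
          rw [← pow_mul, ← Real.rpow_natCast]; push_cast; rfl
      _ = _ := by unfold jbr; rw [Real.sq_sqrt (by positivity)]
  have hp := add_pow_le (zero_le_one (α := ℝ)) (sq_nonneg x) (n + 1)
  simp only [one_pow, Nat.add_sub_cancel] at hp
  rw [pow_zero, one_mul] at h0
  have h0' : y ^ 2 ≤ C0 ^ 2 := by gcongr
  have h1' : (x ^ (n + 1) * y) ^ 2 ≤ C1 ^ 2 := by gcongr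
  calc jbr x ^ (2 * b) * y ^ 2 * (1 + x ^ 2)
      ≤ (1 + x ^ 2) ^ n * y ^ 2 * (1 + x ^ 2) := by gcongr
    _ = (1 + x ^ 2) ^ (n + 1) * y ^ 2 := by ring
    _ ≤ 2 ^ n * (1 + (x ^ 2) ^ (n + 1)) * y ^ 2 := by gcongr
    _ = 2 ^ n * (y ^ 2 + (x ^ (n + 1) * y) ^ 2) := by ring
    _ ≤ 2 ^ n * (C0 ^ 2 + C1 ^ 2) := by gcongr
    _ ≤ _ := by linarith

lemma dtau_lower {τ θ : ℝ} (hτ : 0 < τ) (h1 : |θ| ≤ Real.pi / τ) :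
    |θ| / 2 ≤ ‖dtau τ θ‖ := by
  have h2 : |τ * θ / 2| ≤ Real.pi / 2 := by
    rw [abs_div, abs_mul, abs_of_pos hτ, abs_two]
    rw [le_div_iff₀ hτ] at h1
    linarith
  have h3 := Real.mul_abs_le_abs_sin h2
  unfold dtau
  have h4 : Complex.I * τ * θ = Complex.I * ((τ * θ : ℝ) : ℂ) := by push_cast; ring
  rw [h4, norm_div, Complex.norm_exp_I_mul_ofReal_sub_one, Complex.norm_real,
    Real.norm_of_nonneg hτ.le, le_div_iff₀ hτ, norm_mul, Real.norm_eq_abs, Real.norm_eq_abs, abs_two]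
  have h5 : 1 / 2 ≤ 2 / Real.pi := by
    rw [div_le_div_iff₀ (by norm_num) Real.pi_pos]; linarith [Real.pi_le_four]
  have h6 : |τ * θ / 2| = τ * |θ| / 2 := by rw [abs_div, abs_mul, abs_of_pos hτ, abs_two]
  rw [h6] at h3
  have h7 : 0 ≤ τ * |θ| / 2 := by positivity
  nlinarith

lemma dtau_continuous (τ : ℝ) : Continuous (dtau τ) := by
  unfold dtau; fun_prop

lemma dG_continuous {τ : ℝ} (hτ : 0 < τ) (b : ℝ) {η : ℝ → ℝ} (hηc : HasCompactSupport η) :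
    Continuous (dG τ b η) := by
  obtain ⟨R, hR⟩ := hηc.isCompact.isBounded.subset_closedBall (0 : ℝ)
  have hs : ∀ x, R < |x| → η x = 0 := by
    intro x hx
    by_contra hne
    have := hR (subset_tsupport η hne)
    rw [Metric.mem_closedBall, dist_zero_right, Real.norm_eq_abs] at this
    exact absurd this (not_le.2 hx)
  have h1 : Continuous (dS τ η) := by
    have : dS τ η = fun θ : ℝ => (τ : ℂ) * ∑ m ∈ Finset.Icc ⌈-(R / τ)⌉ ⌊R / τ⌋,
        (η ((m : ℝ) * τ) : ℂ) * Complex.exp (Complex.I * m * τ * θ) := by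
      funext θ
      unfold dS
      rw [tsum_eq_sum (dS_eq_sum hτ hs θ)]
    rw [this]
    fun_prop
  have h2 : Continuous fun θ => jbr ‖dtau τ θ‖ := by
    have := dtau_continuous τ
    unfold jbr
    fun_prop
  unfold dG
  refine (h2.rpow_const fun θ => Or.inl ?_).mul (by fun_prop)
  linarith [jbr_one_le ‖dtau τ θ‖]

lemma exp_periodic_aux {τ : ℝ} (hτ : 0 < τ) (m : ℤ) (θ : ℝ) :
    Complex.exp (Complex.I * m * τ * ((θ + 2 * Real.pi / τ : ℝ) : ℂ))
      = Complex.exp (Complex.I * m * τ * θ) := by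
  have hτc : (τ : ℂ) ≠ 0 := by exact_mod_cast hτ.ne'
  rw [Complex.exp_eq_exp_iff_exists_int]
  refine ⟨m, ?_⟩
  push_cast
  field_simp

lemma dG_periodic {τ : ℝ} (hτ : 0 < τ) (b : ℝ) (η : ℝ → ℝ) :
    Function.Periodic (dG τ b η) (2 * Real.pi / τ) := by
  intro θ
  have h1 : dtau τ (θ + 2 * Real.pi / τ) = dtau τ θ := by
    have := exp_periodic_aux hτ 1 θ
    unfold dtau
    simp only [Int.cast_one, mul_one] at this
    rw [this]
  unfold dG dS
  rw [h1]
  simp only [exp_periodic_aux hτ]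

lemma dG_integral (η : ℝ → ℝ) (hη : ContDiff ℝ (⊤ : ℕ∞) η) (hηc : HasCompactSupport η) (b : ℝ) :
    ∃ C > 0, ∀ τ ∈ Set.Ioc (0 : ℝ) 1, ∀ a : ℝ,
      ∫ σ in Set.Ioc (-(Real.pi / τ)) (Real.pi / τ), dG τ b η (σ - a) ≤ C := by
  obtain ⟨C, hC, h⟩ := dG_decay η hη hηc b
  refine ⟨4 * C * Real.pi, by positivity, fun τ hτ a => ?_⟩
  have hp : 0 < Real.pi / τ := div_pos Real.pi_pos hτ.1
  rw [← intervalIntegral.integral_of_le (by linarith),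
    intervalIntegral.integral_comp_sub_right (fun σ => dG τ b η σ)]
  have e1 : Real.pi / τ - a = (-(Real.pi / τ) - a) + 2 * Real.pi / τ := by ring
  rw [e1, (dG_periodic hτ.1 b η).intervalIntegral_add_eq _ (-(Real.pi / τ))]
  have e2 : -(Real.pi / τ) + 2 * Real.pi / τ = Real.pi / τ := by ring
  rw [e2, intervalIntegral.integral_of_le (by linarith)]
  have hint : Integrable (fun θ : ℝ => 4 * C * (1 + θ ^ 2)⁻¹) :=
    integrable_inv_one_add_sq.const_mul _
  calc ∫ σ in Set.Ioc (-(Real.pi / τ)) (Real.pi / τ), dG τ b η σ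
      ≤ ∫ σ in Set.Ioc (-(Real.pi / τ)) (Real.pi / τ), 4 * C * (1 + σ ^ 2)⁻¹ := by
        apply setIntegral_mono_on
        · exact (dG_continuous hτ.1 b hηc).integrableOn_Ioc
        · exact hint.integrableOn
        · exact measurableSet_Ioc
        · intro θ hθ
          have h1 := dtau_lower hτ.1 (abs_le.2 ⟨hθ.1.le, hθ.2⟩)
          have h2 := h τ hτ θ
          have h3 := dG_nonneg τ b η θ
          rw [← div_eq_mul_inv, le_div_iff₀ (by positivity)]
          have h4 : (|θ| / 2) ^ 2 ≤ ‖dtau τ θ‖ ^ 2 := by gcongr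
          rw [div_pow, sq_abs] at h4
          nlinarith
    _ ≤ ∫ σ, 4 * C * (1 + σ ^ 2)⁻¹ :=
        setIntegral_le_integral hint (Eventually.of_forall fun θ => by positivity)
    _ = 4 * C * Real.pi := by rw [integral_const_mul, integral_univ_inv_one_add_sq]

/-- Uniform bound `‖(η(nτ) e^{inτ∂_x²} f)_n‖_{X^{s,b}_τ} ≲ ‖f‖_{H^s}`.
The sequence `(η(nτ) e^{inτ∂_x²} f)_n` is described through its Fourier coefficients
`η(nτ) e^{-inτk²} f̂(k)`. -/
theorem discrete_bourgain_free_evolution (η : ℝ → ℝ) (hη : ContDiff ℝ (⊤ : ℕ∞) η)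
    (hηc : HasCompactSupport η) (s b : ℝ) :
    ∃ C > (0 : ℝ), ∀ τ ∈ Set.Ioc (0 : ℝ) 1, ∀ f : Torus → ℂ, InHs s f →
      ∀ v : ℤ → Torus → ℂ, {n : ℤ | v n ≠ 0}.Finite →
        (∀ (n : ℤ) (k : ℤ), fourierCoeff (v n) k
            = (η ((n : ℝ) * τ) : ℂ)
                * Complex.exp (-Complex.I * Complex.ofReal ((n : ℝ) * τ) * (k : ℂ) ^ 2)
                * fourierCoeff f k) →
        XdNorm τ s b v ≤ C * hsNorm s f := by
  obtain ⟨C, hC, h⟩ := dG_integral η hη hηc b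
  refine ⟨Real.sqrt C, Real.sqrt_pos.2 hC, fun τ hτ f hf v _ hv => ?_⟩
  unfold XdNorm hsNorm
  rw [← Real.sqrt_mul hC.le]
  apply Real.sqrt_le_sqrt
  set a : ℤ → ℝ := fun k => jbr k ^ (2 * s) * ‖fourierCoeff f k‖ ^ 2 with ha
  have ha0 : ∀ k, 0 ≤ a k := fun k =>
    mul_nonneg (Real.rpow_nonneg (by linarith [jbr_one_le (k : ℝ)]) _) (by positivity)
  have hterm : ∀ (σ : ℝ) (k : ℤ),
      jbr k ^ (2 * s) * jbr ‖dtau τ (σ - (k : ℝ) ^ 2)‖ ^ (2 * b) *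
      ‖(τ : ℂ) * ∑' m : ℤ, fourierCoeff (v m) k * Complex.exp (Complex.I * m * τ * σ)‖ ^ 2
      = a k * dG τ b η (σ - (k : ℝ) ^ 2) := by
    intro σ k
    have e : ∀ m : ℤ, fourierCoeff (v m) k * Complex.exp (Complex.I * m * τ * σ)
        = fourierCoeff f k * ((η ((m : ℝ) * τ) : ℂ)
          * Complex.exp (Complex.I * m * τ * ((σ - (k : ℝ) ^ 2 : ℝ) : ℂ))) := by
      intro m
      have e1 : Complex.exp (Complex.I * m * τ * ((σ - (k : ℝ) ^ 2 : ℝ) : ℂ))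
          = Complex.exp (-Complex.I * Complex.ofReal ((m : ℝ) * τ) * (k : ℂ) ^ 2)
            * Complex.exp (Complex.I * m * τ * σ) := by
        rw [← Complex.exp_add]; congr 1; push_cast; ring
      rw [hv, e1]; ring
    rw [tsum_congr e, tsum_mul_left]
    simp only [ha, dG, dS, norm_mul]
    ring
  simp only [hterm]
  have hI : ∀ k : ℤ, Integrable (fun σ => a k * dG τ b η (σ - (k : ℝ) ^ 2))
      (volume.restrict (Set.Ioc (-(Real.pi / τ)) (Real.pi / τ))) := by
    intro k
    have := dG_continuous hτ.1 b hηc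
    have h2 : Continuous (fun σ => a k * dG τ b η (σ - (k : ℝ) ^ 2)) := by fun_prop
    exact h2.integrableOn_Ioc
  have hle : ∀ k : ℤ, ∫ σ in Set.Ioc (-(Real.pi / τ)) (Real.pi / τ),
      a k * dG τ b η (σ - (k : ℝ) ^ 2) ≤ C * a k := by
    intro k
    rw [integral_const_mul, mul_comm C]
    exact mul_le_mul_of_nonneg_left (h τ hτ _) (ha0 k)
  have hnn : ∀ (k : ℤ) σ, 0 ≤ a k * dG τ b η (σ - (k : ℝ) ^ 2) :=
    fun k σ => mul_nonneg (ha0 k) (dG_nonneg _ _ _ _)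
  have hCa : Summable fun k => C * a k := hf.2.mul_left C
  have hsI : Summable fun k : ℤ => ∫ σ in Set.Ioc (-(Real.pi / τ)) (Real.pi / τ),
      a k * dG τ b η (σ - (k : ℝ) ^ 2) :=
    Summable.of_nonneg_of_le (fun k => integral_nonneg (hnn k)) hle hCa
  rw [← integral_tsum_of_summable_integral_norm hI
    (by simpa only [Real.norm_of_nonneg (hnn _ _)] using hsI), ← tsum_mul_left]
  exact hsI.tsum_le_tsum hle hCa
end
end

section
/- There exists C > 0 such that for every τ ∈ (0,1] and every sequence (u_n)_{n∈ℤ} of functions in L²(𝕋) with only finitely many nonzero terms, ‖(Π_τ u_n)_{n∈ℤ}‖_{ℓ⁴_τ L⁴} ≤ C ‖(u_n)‖_{X^{0,3/8}_τ}. -/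
noncomputable section

open MeasureTheory Complex Filter Topology AddCircle
open scoped ENNReal

theorem hcount0 (D : ℝ) (A : Finset ℤ) (hn : ∀ q ∈ A, 0 ≤ q)
    (h : ∀ q ∈ A, ∀ q' ∈ A, |(q:ℝ)^2 - (q':ℝ)^2| ≤ D) : (A.card : ℝ) ≤ Real.sqrt D + 1 := by
  rcases A.eq_empty_or_nonempty with rfl | hA
  · simp; positivity
  set q0 := A.min' hA with hq0
  have h0 : q0 ∈ A := A.min'_mem hA
  have hsub : A ⊆ Finset.Icc q0 (q0 + ⌊Real.sqrt D⌋) := by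
    intro q hq
    have h1 : q0 ≤ q := A.min'_le q hq
    rw [Finset.mem_Icc]
    refine ⟨h1, ?_⟩
    have h2 := h q hq q0 h0
    have h3 : ((q - q0 : ℤ) : ℝ) ≤ Real.sqrt D := by
      apply Real.le_sqrt_of_sq_le
      have h4 := (abs_le.1 h2).2
      have h5 : (0:ℝ) ≤ q0 := by exact_mod_cast hn q0 h0
      have h6 : (q0:ℝ) ≤ q := by exact_mod_cast h1
      push_cast
      nlinarith
    have := Int.le_floor.2 h3
    omega
  have hc := Finset.card_le_card hsub
  rw [Int.card_Icc] at hc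
  have hf : 0 ≤ ⌊Real.sqrt D⌋ := Int.floor_nonneg.2 (Real.sqrt_nonneg D)
  have hc' : (A.card : ℤ) ≤ ⌊Real.sqrt D⌋ + 1 := by omega
  have : ((A.card : ℤ) : ℝ) ≤ ((⌊Real.sqrt D⌋ + 1 : ℤ) : ℝ) := by exact_mod_cast hc'
  have h7 := Int.floor_le (Real.sqrt D)
  push_cast at this
  linarith

theorem hcount (D : ℝ) (A : Finset ℤ)
    (h : ∀ q ∈ A, ∀ q' ∈ A, |(q:ℝ)^2 - (q':ℝ)^2| ≤ D) :
    (A.card : ℝ) ≤ 2 * (Real.sqrt D + 1) := by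
  have h1 : A.card ≤ 2 * (A.image (fun q => |q|)).card := by
    apply Finset.card_le_mul_card_image
    intro b hb
    have : (A.filter fun q => |q| = b) ⊆ {b, -b} := by
      intro q hq
      rw [Finset.mem_filter] at hq
      have := eq_or_eq_neg_of_abs_eq hq.2
      simpa using this
    exact (Finset.card_le_card this).trans Finset.card_le_two
  have h2 := hcount0 D (A.image (fun q => |q|)) (by
      intro q hq
      obtain ⟨a, _, rfl⟩ := Finset.mem_image.1 hq
      exact abs_nonneg a) (by
      intro q hq q' hq'
      obtain ⟨a, ha, rfl⟩ := Finset.mem_image.1 hq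
      obtain ⟨a', ha', rfl⟩ := Finset.mem_image.1 hq'
      simpa using h a ha a' ha')
  have h3 : (A.card : ℝ) ≤ 2 * ((A.image (fun q => |q|)).card : ℝ) := by exact_mod_cast h1
  linarith

theorem chord_real (x : ℝ) (hx : |x| ≤ Real.pi) :
    |x| ≤ (Real.pi / 2) * ‖Complex.exp (Complex.I * x) - 1‖ := by
  rw [Complex.norm_exp_I_mul_ofReal_sub_one]
  have hp := Real.pi_pos
  have h1 := Real.mul_le_sin (x := |x| / 2) (by positivity) (by linarith)
  have h2 : |Real.sin (x/2)| ≥ Real.sin (|x|/2) := by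
    rcases abs_cases x with h | h
    · rw [h.1]; exact le_abs_self _
    · rw [h.1, show -x/2 = -(x/2) by ring, Real.sin_neg]; exact neg_le_abs _
  rw [Real.norm_eq_abs, abs_mul, abs_two]
  have h3 : 2 / Real.pi * (|x| / 2) = |x| / Real.pi := by field_simp
  rw [h3, div_le_iff₀ hp] at h1
  nlinarith

/-- chord length. -/
def chord (θ : Torus) : ℝ := ‖(fourier 1 θ : ℂ) - 1‖

theorem chord_coe (x : ℝ) : chord (x : Torus) = ‖Complex.exp (Complex.I * x) - 1‖ := by
  unfold chord
  rw [fourier_coe_apply]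
  congr 3
  have : (Real.pi : ℂ) ≠ 0 := by exact_mod_cast Real.pi_ne_zero
  push_cast
  field_simp

theorem chord_nonneg (θ : Torus) : 0 ≤ chord θ := norm_nonneg _

theorem chord_le_two (θ : Torus) : chord θ ≤ 2 := by
  unfold chord
  refine (norm_sub_le _ _).trans ?_
  simp only [fourier_apply, Circle.norm_coe, norm_one]
  norm_num

theorem chord_continuous : Continuous chord := by
  unfold chord
  fun_prop

theorem chord_add (a b : Torus) : chord (a + b) ≤ chord a + chord b := by
  unfold chord
  have h : (fourier 1 (a+b) : ℂ) - 1 = fourier 1 a * (fourier 1 b - 1) + (fourier 1 a - 1) := by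
    simp only [fourier_apply, one_smul, toCircle_add, Circle.coe_mul]; ring
  rw [h]
  refine (norm_add_le _ _).trans ?_
  rw [norm_mul]
  simp only [fourier_apply, Circle.norm_coe, one_mul]
  linarith

theorem chord_neg (a : Torus) : chord (-a) = chord a := by
  unfold chord
  have h : (fourier 1 (-a) : ℂ) - 1 = - (fourier 1 (-a) * (fourier 1 a - 1)) := by
    have : (fourier 1 (-a) : ℂ) * fourier 1 a = 1 := by
      rw [fourier_apply, fourier_apply, ← Circle.coe_mul, one_smul, one_smul, ← toCircle_add]
      simp
    rw [mul_sub, this]; ring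
  rw [h, norm_neg, norm_mul]
  simp only [fourier_apply, Circle.norm_coe, one_mul]

theorem norm_le_chord (θ : Torus) : ‖θ‖ ≤ (Real.pi / 2) * chord θ := by
  obtain ⟨x, hx, rfl⟩ : ∃ x : ℝ, x ∈ Set.Ioc (-Real.pi) Real.pi ∧ (x : Torus) = θ := by
    have := AddCircle.coe_image_Ioc_eq (2 * Real.pi) (-Real.pi)
    have h2 : θ ∈ ((↑) : ℝ → Torus) '' Set.Ioc (-Real.pi) (-Real.pi + 2 * Real.pi) := by
      rw [this]; trivial
    obtain ⟨x, hx, h⟩ := h2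
    refine ⟨x, ⟨hx.1, by linarith [hx.2]⟩, h⟩
  have h1 : |x| ≤ Real.pi := abs_le.2 ⟨hx.1.le, hx.2⟩
  rw [chord_coe]
  refine le_trans ?_ (chord_real x h1)
  exact QuotientAddGroup.norm_mk_le_norm

theorem meas_chord (c : Torus) (δ : ℝ) (hδ : 0 ≤ δ) :
    (haarAddCircle (T := 2 * Real.pi)).real {θ : Torus | chord (θ - c) ≤ δ} ≤ δ / 2 := by
  have h1 : {θ : Torus | chord (θ - c) ≤ δ} ⊆ Metric.closedBall c (Real.pi / 2 * δ) := by
    intro θ hθ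
    rw [Metric.mem_closedBall, dist_eq_norm]
    refine (norm_le_chord _).trans ?_
    have := Real.pi_pos
    exact mul_le_mul_of_nonneg_left hθ (by positivity)
  have h2 := AddCircle.volume_closedBall (T := 2 * Real.pi) (x := c) (Real.pi / 2 * δ)
  rw [AddCircle.volume_eq_smul_haarAddCircle] at h2
  have h3 := measureReal_mono (μ := haarAddCircle (T := 2 * Real.pi)) h1
  refine h3.trans ?_
  have hp := Real.pi_pos
  have h4 := congrArg ENNReal.toReal h2
  simp only [Measure.smul_apply, smul_eq_mul, ENNReal.toReal_mul] at h4
  rw [ENNReal.toReal_ofReal (by positivity), ENNReal.toReal_ofReal (by positivity)] at h4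
  have h5 := min_le_right (2 * Real.pi) (2 * (Real.pi / 2 * δ))
  rw [← h4] at h5
  unfold Measure.real
  nlinarith

theorem chord_gap (x y : ℝ) (θ : Torus) (δ : ℝ) (hxy : |x - y| ≤ Real.pi)
    (hx : chord (θ - x) ≤ δ) (hy : chord (θ - y) ≤ δ) : |x - y| ≤ Real.pi * δ := by
  have h1 := chord_add (θ - y) (-(θ - x))
  rw [chord_neg] at h1
  have h2 : θ - (y : Torus) + -(θ - (x:Torus)) = ((x - y : ℝ) : Torus) := by
    rw [AddCircle.coe_sub]; abel
  rw [h2, chord_coe] at h1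
  have h3 := chord_real (x - y) hxy
  have := Real.pi_pos
  calc |x - y| ≤ _ := h3
    _ ≤ (Real.pi / 2) * (2 * δ) := by
      apply mul_le_mul_of_nonneg_left _ (by positivity)
      linarith
    _ = _ := by ring


/-- bounded measurable functions. -/
def BM {E : Type} [NormedAddCommGroup E] [MeasurableSpace E] (f : Torus → E) : Prop :=
  Measurable f ∧ ∃ B, ∀ x, ‖f x‖ ≤ B

theorem BM.integrable {E : Type} [NormedAddCommGroup E] [MeasurableSpace E] [BorelSpace E]
    [SecondCountableTopology E] {f : Torus → E} (h : BM f) :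
    Integrable f (haarAddCircle (T := 2 * Real.pi)) := by
  obtain ⟨hm, B, hB⟩ := h
  exact Integrable.of_bound hm.aestronglyMeasurable B (Filter.Eventually.of_forall hB)

theorem BM.normsq {f : Torus → ℂ} (h : BM f) : BM (fun x => ‖f x‖ ^ 2) := by
  obtain ⟨hm, B, hB⟩ := h
  refine ⟨by fun_prop, B ^ 2, fun x => ?_⟩
  rw [norm_pow, norm_norm]
  exact pow_le_pow_left₀ (norm_nonneg _) (hB x) 2

theorem BM.mul {f g : Torus → ℂ} (hf : BM f) (hg : BM g) : BM (fun x => f x * g x) := by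
  obtain ⟨hm, B, hB⟩ := hf
  obtain ⟨hm', B', hB'⟩ := hg
  refine ⟨by fun_prop, B * B', fun x => ?_⟩
  rw [norm_mul]
  exact mul_le_mul (hB x) (hB' x) (norm_nonneg _) ((norm_nonneg _).trans (hB x))

theorem BM.shift {E : Type} [NormedAddCommGroup E] [MeasurableSpace E]
    {g : Torus → E} (hg : BM g) (θ : Torus) : BM (fun φ => g (θ - φ)) := by
  obtain ⟨hm, B, hB⟩ := hg
  exact ⟨hm.comp (by fun_prop), B, fun x => hB _⟩

theorem BM.of_continuous {f : Torus → ℂ} (hf : Continuous f) : BM f := by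
  refine ⟨hf.measurable, ?_⟩
  obtain ⟨B, hB⟩ := isCompact_univ.exists_bound_of_continuousOn (f := f) hf.continuousOn
  exact ⟨B, fun x => hB x trivial⟩

theorem parseval {f : Torus → ℂ} (hf : MemLp f 2 (haarAddCircle (T := 2 * Real.pi))) :
    HasSum (fun n => ‖fourierCoeff f n‖ ^ 2) (∫ t, ‖f t‖ ^ 2 ∂haarAddCircle) := by
  have h := hasSum_sq_fourierCoeff (hf.toLp f)
  have h1 : fourierCoeff (hf.toLp f) = fourierCoeff f := fourierCoeff_congr_ae hf.coeFn_toLp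
  rw [h1] at h
  convert h using 1
  apply integral_congr_ae
  filter_upwards [hf.coeFn_toLp] with x hx
  rw [hx]

theorem bessel {f : Torus → ℂ} (hf : MemLp f 2 (haarAddCircle (T := 2 * Real.pi)))
    (S : Finset ℤ) :
    ∑ n ∈ S, ‖fourierCoeff f n‖ ^ 2 ≤ ∫ t, ‖f t‖ ^ 2 ∂haarAddCircle :=
  sum_le_hasSum S (fun _ _ => by positivity) (parseval hf)

/-- convolution on the torus -/
def cv (f g : Torus → ℂ) (θ : Torus) : ℂ := ∫ φ, f φ * g (θ - φ) ∂haarAddCircle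

/-- real convolution on the torus -/
def cvr (f g : Torus → ℝ) (θ : Torus) : ℝ := ∫ φ, f φ * g (θ - φ) ∂haarAddCircle

theorem cv_integrable {f g : Torus → ℂ} (hf : BM f) (hg : BM g) :
    Integrable (cv f g) (haarAddCircle (T := 2 * Real.pi)) :=
  Integrable.integrable_convolution (ContinuousLinearMap.mul ℝ ℂ) hf.integrable hg.integrable

theorem cv_integral {f g : Torus → ℂ} (hf : BM f) (hg : BM g) :
    ∫ θ, cv f g θ ∂haarAddCircle
      = (∫ θ, f θ ∂haarAddCircle) * (∫ θ, g θ ∂haarAddCircle) :=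
  integral_convolution (ContinuousLinearMap.mul ℝ ℂ) hf.integrable hg.integrable

theorem cvr_integrable {f g : Torus → ℝ} (hf : BM f) (hg : BM g) :
    Integrable (cvr f g) (haarAddCircle (T := 2 * Real.pi)) :=
  Integrable.integrable_convolution (ContinuousLinearMap.mul ℝ ℝ) hf.integrable hg.integrable

theorem cvr_integral {f g : Torus → ℝ} (hf : BM f) (hg : BM g) :
    ∫ θ, cvr f g θ ∂haarAddCircle
      = (∫ θ, f θ ∂haarAddCircle) * (∫ θ, g θ ∂haarAddCircle) :=
  integral_convolution (ContinuousLinearMap.mul ℝ ℝ) hf.integrable hg.integrable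

theorem cv_memLp {f g : Torus → ℂ} (hf : BM f) (hg : BM g) :
    MemLp (cv f g) 2 (haarAddCircle (T := 2 * Real.pi)) := by
  have h := (cv_integrable hf hg).1
  obtain ⟨hm, B, hB⟩ := hf
  obtain ⟨hm', B', hB'⟩ := hg
  apply MemLp.of_bound h (B * B')
  apply Filter.Eventually.of_forall
  intro θ
  have := norm_integral_le_of_norm_le_const (μ := haarAddCircle (T := 2 * Real.pi))
    (f := fun φ => f φ * g (θ - φ)) (C := B * B') (Filter.Eventually.of_forall (fun φ => by
      rw [norm_mul]
      exact mul_le_mul (hB φ) (hB' _) (norm_nonneg _) ((norm_nonneg _).trans (hB φ))))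
  simpa [cv] using this

theorem cv_coeff {f g : Torus → ℂ} (hf : BM f) (hg : BM g) (n : ℤ) :
    fourierCoeff (cv f g) n = fourierCoeff f n * fourierCoeff g n := by
  have he : BM (fun x : Torus => (fourier (-n) x : ℂ)) :=
    BM.of_continuous (fourier (-n)).continuous
  have := cv_integral (he.mul hf) (he.mul hg)
  simp only [fourierCoeff, smul_eq_mul]
  rw [← this]
  congr 1
  ext θ
  unfold cv
  rw [← integral_const_mul]
  congr 1
  ext φ
  have : (fourier (-n) θ : ℂ) = fourier (-n) φ * fourier (-n) (θ - φ) := by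
    simp only [fourier_apply]
    rw [← Circle.coe_mul, ← toCircle_add, ← smul_add, add_sub_cancel]
  rw [this]; ring

theorem cs_int {h : Torus → ℂ} (hh : BM h) (A : Set Torus) (hA : MeasurableSet A)
    (hs : ∀ x, h x ≠ 0 → x ∈ A) :
    ‖∫ x, h x ∂haarAddCircle‖ ^ 2
      ≤ (haarAddCircle (T := 2 * Real.pi)).real A * ∫ x, ‖h x‖ ^ 2 ∂haarAddCircle := by
  have h0 := norm_integral_le_integral_norm (μ := haarAddCircle (T := 2 * Real.pi)) h
  set X := ∫ x, ‖h x‖ ∂(haarAddCircle (T := 2 * Real.pi)) with hX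
  have hi1 := hh.integrable.norm
  have hi2 := hh.normsq.integrable
  have hi3 : Integrable (A.indicator (fun _ => (1:ℝ))) (haarAddCircle (T := 2 * Real.pi)) :=
    (integrable_const 1).indicator hA
  have hI3 : ∫ x, A.indicator (fun _ => (1:ℝ)) x ∂(haarAddCircle (T := 2 * Real.pi))
      = (haarAddCircle (T := 2 * Real.pi)).real A := by
    rw [integral_indicator hA]; simp
  have key : ∀ t : ℝ, 0 ≤ (haarAddCircle (T := 2 * Real.pi)).real A * (t * t) + (-2 * X) * t
      + ∫ x, ‖h x‖ ^ 2 ∂haarAddCircle := by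
    intro t
    have : 0 ≤ ∫ x, (t^2 * A.indicator (fun _ => (1:ℝ)) x + (-2 * t) * ‖h x‖ + ‖h x‖ ^ 2)
        ∂(haarAddCircle (T := 2 * Real.pi)) := by
      apply integral_nonneg
      intro x
      by_cases hx : x ∈ A
      · simp only [Set.indicator_of_mem hx, Pi.zero_apply]
        nlinarith [sq_nonneg (t - ‖h x‖)]
      · have : h x = 0 := by by_contra hne; exact hx (hs x hne)
        simp [hx, this]
    have hi4 : Integrable (fun x => t^2 * A.indicator (fun _ => (1:ℝ)) x + (-2 * t) * ‖h x‖)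
        (haarAddCircle (T := 2 * Real.pi)) := (hi3.const_mul _).add (hi1.const_mul _)
    rw [integral_add hi4 hi2,
      integral_add (hi3.const_mul _) (hi1.const_mul _), integral_const_mul,
      integral_const_mul, hI3, ← hX] at this
    linarith
  have hd := discrim_le_zero key
  unfold discrim at hd
  have : ‖∫ x, h x ∂haarAddCircle‖ ^ 2 ≤ X ^ 2 := pow_le_pow_left₀ (norm_nonneg _) h0 2
  nlinarith

theorem cv_cs {f g : Torus → ℂ} (hf : BM f) (hg : BM g) (c : Torus) (δ : ℝ) (hδ : 0 ≤ δ)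
    (hs : ∀ x, f x ≠ 0 → chord (x - c) ≤ δ) (θ : Torus) :
    ‖cv f g θ‖ ^ 2 ≤ δ / 2 * cvr (fun x => ‖f x‖ ^ 2) (fun x => ‖g x‖ ^ 2) θ := by
  have h1 := cs_int (hf.mul (hg.shift θ)) {x : Torus | chord (x - c) ≤ δ}
    (measurableSet_le (chord_continuous.measurable.comp (by fun_prop)) measurable_const)
    (fun x hx => hs x (left_ne_zero_of_mul hx))
  refine h1.trans ?_
  have h2 : ∫ x, ‖f x * g (θ - x)‖ ^ 2 ∂haarAddCircle
      = cvr (fun x => ‖f x‖ ^ 2) (fun x => ‖g x‖ ^ 2) θ := by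
    unfold cvr; congr 1; ext x; rw [norm_mul, mul_pow]
  rw [h2]
  apply mul_le_mul_of_nonneg_right (meas_chord c δ hδ)
  rw [← h2]
  exact integral_nonneg (fun x => by positivity)

/-- pairs with given sum -/
def prs (K : Finset ℤ) (l : ℤ) : Finset (ℤ × ℤ) := (K ×ˢ K).filter (fun p => p.1 + p.2 = l)

theorem pair_count (τ : ℝ) (hτ : 0 < τ) (j : ℕ) (K : Finset ℤ)
    (hK : ∀ k ∈ K, τ * (k : ℝ) ^ 2 ≤ 1) (l : ℤ) (θ : Torus) :
    ((((prs K l).filter (fun p => chord (θ - ((τ * ((p.1 : ℝ) ^ 2 + (p.2:ℝ) ^ 2) : ℝ) : Torus))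
      ≤ 4 * τ * 2 ^ j)).card : ℕ) : ℝ) ≤ 14 * Real.sqrt (2 ^ j) := by
  classical
  set A := (prs K l).filter (fun p => chord (θ - ((τ * ((p.1 : ℝ) ^ 2 + (p.2:ℝ) ^ 2) : ℝ) : Torus))
      ≤ 4 * τ * 2 ^ j) with hA
  have hmem : ∀ p ∈ A, p.1 ∈ K ∧ p.2 ∈ K ∧ p.1 + p.2 = l ∧
      chord (θ - ((τ * ((p.1 : ℝ) ^ 2 + (p.2:ℝ) ^ 2) : ℝ) : Torus)) ≤ 4 * τ * 2 ^ j := by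
    intro p hp
    simp only [hA, prs, Finset.mem_filter, Finset.mem_product] at hp
    tauto
  have hinj : Set.InjOn (fun p : ℤ × ℤ => p.1 - p.2) A := by
    intro p hp q hq h
    have h1 := (hmem p hp).2.2.1
    have h2 := (hmem q hq).2.2.1
    simp only at h
    ext <;> omega
  rw [← Finset.card_image_of_injOn hinj]
  have hp := Real.pi_pos
  have hp2 := Real.pi_lt_d2
  have hp3 := Real.pi_gt_three
  refine (hcount (26 * 2 ^ j) _ ?_).trans ?_
  · intro q hq q' hq'
    obtain ⟨a, ha, rfl⟩ := Finset.mem_image.1 hq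
    obtain ⟨b, hb, rfl⟩ := Finset.mem_image.1 hq'
    obtain ⟨ha1, ha2, ha3, ha4⟩ := hmem a ha
    obtain ⟨hb1, hb2, hb3, hb4⟩ := hmem b hb
    have e1 := hK _ ha1
    have e2 := hK _ ha2
    have e3 := hK _ hb1
    have e4 := hK _ hb2
    have f1 : 0 ≤ τ * (a.1:ℝ)^2 := by positivity
    have f2 : 0 ≤ τ * (a.2:ℝ)^2 := by positivity
    have f3 : 0 ≤ τ * (b.1:ℝ)^2 := by positivity
    have f4 : 0 ≤ τ * (b.2:ℝ)^2 := by positivity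
    have hg := chord_gap _ _ θ _ (by rw [abs_le]; constructor <;> nlinarith) ha4 hb4
    rw [← mul_sub, abs_mul, abs_of_pos hτ] at hg
    have hg' : |(a.1:ℝ)^2 + (a.2:ℝ)^2 - ((b.1:ℝ)^2 + (b.2:ℝ)^2)| ≤ 4 * Real.pi * 2 ^ j := by
      refine le_of_mul_le_mul_left ?_ hτ
      linarith
    have hA3 : (a.1:ℝ) + a.2 = l := by exact_mod_cast ha3
    have hB3 : (b.1:ℝ) + b.2 = l := by exact_mod_cast hb3
    push_cast
    have : ((a.1:ℝ) - a.2)^2 - ((b.1:ℝ) - b.2)^2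
        = 2 * ((a.1:ℝ)^2 + (a.2:ℝ)^2 - ((b.1:ℝ)^2 + (b.2:ℝ)^2)) := by
      have : ((a.1:ℝ) + a.2)^2 = ((b.1:ℝ) + b.2)^2 := by rw [hA3, hB3]
      linarith
    rw [this, abs_mul, abs_two]
    have h2j : (0:ℝ) < 2 ^ j := by positivity
    nlinarith
  · rw [Real.sqrt_mul (by norm_num)]
    have h1 : Real.sqrt 26 ≤ 6 := by
      rw [Real.sqrt_le_left (by norm_num)]; norm_num
    have h2 : 1 ≤ Real.sqrt (2 ^ j) := by
      rw [Real.one_le_sqrt]; exact one_le_pow₀ (by norm_num)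
    nlinarith

theorem bilinear (τ : ℝ) (hτ : 0 < τ) (i j : ℕ) (hij : i ≤ j) (K : Finset ℤ)
    (hK : ∀ k ∈ K, τ * (k : ℝ) ^ 2 ≤ 1) (f g : ℤ → Torus → ℂ) (hf : ∀ k, BM (f k))
    (hg : ∀ k, BM (g k))
    (hfs : ∀ k θ, f k θ ≠ 0 → chord (θ - ((τ * (k:ℝ)^2 : ℝ) : Torus)) ≤ τ * 2 ^ (i + 1))
    (hgs : ∀ k θ, g k θ ≠ 0 → chord (θ - ((τ * (k:ℝ)^2 : ℝ) : Torus)) ≤ τ * 2 ^ (j + 1))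
    (S : Finset ℤ) :
    ∑ n ∈ S, ∑ l ∈ (K ×ˢ K).image (fun p => p.1 + p.2),
      ‖∑ p ∈ prs K l, fourierCoeff (f p.1) n * fourierCoeff (g p.2) n‖ ^ 2
    ≤ 14 * τ * 2 ^ i * Real.sqrt (2 ^ j) *
      ((∑ k ∈ K, ∫ θ, ‖f k θ‖ ^ 2 ∂haarAddCircle) *
        (∑ k ∈ K, ∫ θ, ‖g k θ‖ ^ 2 ∂haarAddCircle)) := by
  classical
  rw [Finset.sum_comm]
  have per : ∀ l : ℤ, ∑ n ∈ S,
      ‖∑ p ∈ prs K l, fourierCoeff (f p.1) n * fourierCoeff (g p.2) n‖ ^ 2 ≤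
      14 * τ * 2 ^ i * Real.sqrt (2 ^ j) * ∑ p ∈ prs K l,
        (∫ θ, ‖f p.1 θ‖ ^ 2 ∂haarAddCircle) * (∫ θ, ‖g p.2 θ‖ ^ 2 ∂haarAddCircle) := by
    intro l
    set W : Torus → ℂ := ∑ p ∈ prs K l, cv (f p.1) (g p.2) with hW
    have hWL : MemLp W 2 (haarAddCircle (T := 2 * Real.pi)) :=
      memLp_finsetSum' _ (fun p _ => cv_memLp (hf _) (hg _))
    have hWc : ∀ n, fourierCoeff W n
        = ∑ p ∈ prs K l, fourierCoeff (f p.1) n * fourierCoeff (g p.2) n := by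
      intro n
      rw [hW, fourierCoeff.sum _ _ (fun p _ => cv_integrable (hf _) (hg _)), Finset.sum_apply]
      exact Finset.sum_congr rfl (fun p _ => cv_coeff (hf _) (hg _) n)
    simp_rw [← hWc]
    refine (bessel hWL S).trans ?_
    have hR : ∀ p ∈ prs K l, Integrable (cvr (fun x => ‖f p.1 x‖ ^ 2) (fun x => ‖g p.2 x‖ ^ 2))
      (haarAddCircle (T := 2 * Real.pi)) := fun p _ =>
        cvr_integrable (hf _).normsq (hg _).normsq
    calc ∫ t, ‖W t‖ ^ 2 ∂haarAddCircle
        ≤ ∫ t, 14 * τ * 2 ^ i * Real.sqrt (2 ^ j) * ∑ p ∈ prs K l,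
          cvr (fun x => ‖f p.1 x‖ ^ 2) (fun x => ‖g p.2 x‖ ^ 2) t ∂haarAddCircle := by
          apply integral_mono_of_nonneg (Filter.Eventually.of_forall (fun x => by positivity))
          · exact (integrable_finsetSum _ hR).const_mul _
          apply Filter.Eventually.of_forall
          intro θ
          set A := (prs K l).filter (fun p =>
            chord (θ - ((τ * ((p.1 : ℝ) ^ 2 + (p.2:ℝ) ^ 2) : ℝ) : Torus)) ≤ 4 * τ * 2 ^ j)
            with hA
          have hc := pair_count τ hτ j K hK l θ
          rw [← hA] at hc
          have hWA : W θ = ∑ p ∈ A, cv (f p.1) (g p.2) θ := by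
            rw [hW, Finset.sum_apply]
            symm
            apply Finset.sum_subset (Finset.filter_subset _ _)
            intro p hp hpA
            unfold cv
            apply integral_eq_zero_of_ae
            apply Filter.Eventually.of_forall
            intro φ
            by_contra hne
            have n1 := hfs _ _ (left_ne_zero_of_mul hne)
            have n2 := hgs _ _ (right_ne_zero_of_mul hne)
            apply hpA
            rw [Finset.mem_filter]
            refine ⟨hp, ?_⟩
            have := chord_add (φ - ((τ * (p.1:ℝ)^2 : ℝ) : Torus))
              (θ - φ - ((τ * (p.2:ℝ)^2 : ℝ) : Torus))
            have e : φ - ((τ * (p.1:ℝ)^2 : ℝ) : Torus) + (θ - φ - ((τ * (p.2:ℝ)^2 : ℝ) : Torus))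
              = θ - ((τ * ((p.1 : ℝ) ^ 2 + (p.2:ℝ) ^ 2) : ℝ) : Torus) := by
              rw [mul_add, AddCircle.coe_add]; abel
            rw [e] at this
            refine this.trans ?_
            have h2 : (2:ℝ) ^ i ≤ 2 ^ j := pow_le_pow_right₀ (by norm_num) hij
            rw [pow_succ 2 i] at n1
            rw [pow_succ 2 j] at n2
            nlinarith
          have hcs : ‖W θ‖ ^ 2 ≤ A.card * ∑ p ∈ A, ‖cv (f p.1) (g p.2) θ‖ ^ 2 := by
            rw [hWA]
            refine (pow_le_pow_left₀ (norm_nonneg _) (norm_sum_le _ _) 2).trans ?_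
            exact sq_sum_le_card_mul_sum_sq
          refine hcs.trans ?_
          have hnn : ∀ p : ℤ × ℤ,
              0 ≤ cvr (fun x => ‖f p.1 x‖ ^ 2) (fun x => ‖g p.2 x‖ ^ 2) θ := fun p =>
            integral_nonneg (fun x => by positivity)
          have hb : ∑ p ∈ A, ‖cv (f p.1) (g p.2) θ‖ ^ 2 ≤ τ * 2 ^ i * ∑ p ∈ prs K l,
              cvr (fun x => ‖f p.1 x‖ ^ 2) (fun x => ‖g p.2 x‖ ^ 2) θ := by
            rw [Finset.mul_sum]
            have hsub : A ⊆ prs K l := Finset.filter_subset _ _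
            refine le_trans ?_ (Finset.sum_le_sum_of_subset_of_nonneg
              hsub (fun p _ _ => mul_nonneg (by positivity) (hnn p)))
            apply Finset.sum_le_sum
            intro p _
            have := cv_cs (hf p.1) (hg p.2) _ _ (by positivity) (hfs p.1) θ
            have e : τ * 2 ^ (i + 1) / 2 = τ * 2 ^ i := by rw [pow_succ]; ring
            rwa [e] at this
          calc (A.card : ℝ) * ∑ p ∈ A, ‖cv (f p.1) (g p.2) θ‖ ^ 2
              ≤ (14 * Real.sqrt (2 ^ j)) * (τ * 2 ^ i * ∑ p ∈ prs K l,
              cvr (fun x => ‖f p.1 x‖ ^ 2) (fun x => ‖g p.2 x‖ ^ 2) θ) :=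
                mul_le_mul hc hb (Finset.sum_nonneg (fun _ _ => by positivity)) (by positivity)
            _ = _ := by ring
      _ = _ := by
          rw [integral_const_mul, integral_finsetSum _ hR]
          congr 1
          exact Finset.sum_congr rfl (fun p _ => cvr_integral (hf _).normsq (hg _).normsq)
  refine (Finset.sum_le_sum (fun l _ => per l)).trans ?_
  rw [← Finset.mul_sum]
  apply le_of_eq
  congr 1
  unfold prs
  rw [Finset.sum_fiberwise_of_maps_to (fun p hp => Finset.mem_image_of_mem _ hp)
    (fun p : ℤ × ℤ => (∫ θ, ‖f p.1 θ‖ ^ 2 ∂haarAddCircle) * (∫ θ, ‖g p.2 θ‖ ^ 2 ∂haarAddCircle)),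
    Finset.sum_mul_sum, Finset.sum_product]


theorem mink {α ι : Type} (A : Finset α) (I : Finset ι) (x : ι → α → ℂ) (b : ι → ℝ)
    (hb : ∀ i ∈ I, 0 ≤ b i) (h : ∀ i ∈ I, ∑ a ∈ A, ‖x i a‖ ^ 2 ≤ b i ^ 2) :
    ∑ a ∈ A, ‖∑ i ∈ I, x i a‖ ^ 2 ≤ (∑ i ∈ I, b i) ^ 2 := by
  let v : ι → EuclideanSpace ℂ A := fun i => WithLp.toLp 2 (fun a => x i a)
  have hv : ∀ i ∈ I, ‖v i‖ ≤ b i := by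
    intro i hi
    apply le_of_sq_le_sq _ (hb i hi)
    rw [EuclideanSpace.norm_sq_eq]
    refine le_trans (le_of_eq ?_) (h i hi)
    exact Finset.sum_coe_sort A (fun a => ‖x i a‖ ^ 2)
  have h1 : ‖∑ i ∈ I, v i‖ ≤ ∑ i ∈ I, b i := (norm_sum_le _ _).trans (Finset.sum_le_sum hv)
  have h2 := pow_le_pow_left₀ (norm_nonneg _) h1 2
  refine le_trans (le_of_eq ?_) h2
  rw [EuclideanSpace.norm_sq_eq, ← Finset.sum_coe_sort]
  apply Finset.sum_congr rfl
  intro a _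
  simp [v]

theorem geo_img (r : ℝ) (hr0 : 0 ≤ r) (hr1 : r < 1) (A : Finset ℕ) (φ : ℕ → ℕ)
    (hφ : Set.InjOn φ A) : ∑ j ∈ A, r ^ (φ j) ≤ (1 - r)⁻¹ := by
  classical
  rw [← Finset.sum_image (f := fun m => r ^ m) hφ, ← tsum_geometric_of_lt_one hr0 hr1]
  exact (summable_geometric_of_lt_one hr0 hr1).sum_le_tsum _ (fun _ _ => by positivity)

theorem geo_two (r : ℝ) (hr0 : 0 ≤ r) (hr1 : r < 1) (J i : ℕ) :
    ∑ j ∈ Finset.range J, r ^ ((i - j) + (j - i)) ≤ 2 * (1 - r)⁻¹ := by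
  rw [← Finset.sum_filter_add_sum_filter_not (Finset.range J) (fun j => j ≤ i)]
  have h1 := geo_img r hr0 hr1 ((Finset.range J).filter (fun j => j ≤ i))
    (fun j => (i - j) + (j - i)) (by
      intro a ha b hb hab
      simp at ha hb hab
      omega)
  have h2 := geo_img r hr0 hr1 ((Finset.range J).filter (fun j => ¬ j ≤ i))
    (fun j => (i - j) + (j - i)) (by
      intro a ha b hb hab
      simp at ha hb hab
      omega)
  linarith

theorem schur (r : ℝ) (hr0 : 0 ≤ r) (hr1 : r < 1) (J : ℕ) (β : ℕ → ℝ) :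
    ∑ p ∈ Finset.range J ×ˢ Finset.range J, r ^ ((p.1 - p.2) + (p.2 - p.1)) * (β p.1 * β p.2)
      ≤ 2 * (1 - r)⁻¹ * ∑ i ∈ Finset.range J, β i ^ 2 := by
  rw [Finset.sum_product]
  have h1 : ∀ i ∈ Finset.range J, ∀ j ∈ Finset.range J,
      r ^ ((i - j) + (j - i)) * (β i * β j)
      ≤ r ^ ((i - j) + (j - i)) * (β i ^ 2 / 2) + r ^ ((i - j) + (j - i)) * (β j ^ 2 / 2) := by
    intro i _ j _
    rw [← mul_add]
    apply mul_le_mul_of_nonneg_left _ (by positivity)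
    nlinarith [sq_nonneg (β i - β j)]
  refine (Finset.sum_le_sum (fun i hi => Finset.sum_le_sum (h1 i hi))).trans ?_
  simp_rw [Finset.sum_add_distrib]
  have h2 : ∑ i ∈ Finset.range J, ∑ j ∈ Finset.range J, r ^ ((i - j) + (j - i)) * (β i ^ 2 / 2)
      ≤ (1 - r)⁻¹ * ∑ i ∈ Finset.range J, β i ^ 2 := by
    rw [Finset.mul_sum]
    apply Finset.sum_le_sum
    intro i _
    rw [← Finset.sum_mul]
    have := geo_two r hr0 hr1 J i
    nlinarith [sq_nonneg (β i)]
  have h3 : ∑ i ∈ Finset.range J, ∑ j ∈ Finset.range J, r ^ ((i - j) + (j - i)) * (β j ^ 2 / 2)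
      ≤ (1 - r)⁻¹ * ∑ i ∈ Finset.range J, β i ^ 2 := by
    rw [Finset.sum_comm]
    refine le_trans (le_of_eq ?_) h2
    apply Finset.sum_congr rfl
    intro i _
    apply Finset.sum_congr rfl
    intro j _
    rw [add_comm (j - i)]
  linarith

/-- weight -/
def wt (τ : ℝ) (θ : Torus) : ℝ := jbr (chord θ / τ)

theorem wt_cont (τ : ℝ) : Continuous (wt τ) := by
  unfold wt jbr
  have := chord_continuous
  fun_prop

theorem one_le_wt (τ : ℝ) (θ : Torus) : 1 ≤ wt τ θ := by
  unfold wt jbr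
  rw [Real.one_le_sqrt]
  nlinarith [sq_nonneg (chord θ / τ)]

theorem wt_le (τ : ℝ) (hτ : 0 < τ) (θ : Torus) : wt τ θ ≤ 1 + 2 / τ := by
  unfold wt jbr
  have h1 : chord θ / τ ≤ 2 / τ := div_le_div_of_nonneg_right (chord_le_two θ) hτ.le
  have h2 : 0 ≤ chord θ / τ := div_nonneg (chord_nonneg θ) hτ.le
  rw [Real.sqrt_le_left (by linarith)]
  nlinarith

theorem chord_le_wt (τ : ℝ) (hτ : 0 < τ) (θ : Torus) : chord θ ≤ τ * wt τ θ := by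
  have h2 : chord θ / τ ≤ wt τ θ := by
    unfold wt jbr
    apply Real.le_sqrt_of_sq_le
    linarith
  rw [div_le_iff₀ hτ] at h2
  linarith

/-- dyadic level -/
def lev (τ : ℝ) (θ : Torus) : ℕ := Nat.log 2 ⌊wt τ θ⌋₊

theorem lev_meas (τ : ℝ) : Measurable (lev τ) :=
  (measurable_from_top (f := Nat.log 2)).comp (Nat.measurable_floor.comp (wt_cont τ).measurable)

theorem lev_le (τ : ℝ) (θ : Torus) : (2:ℝ) ^ lev τ θ ≤ wt τ θ := by
  have h1 := one_le_wt τ θ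
  have h2 : ⌊wt τ θ⌋₊ ≠ 0 := by
    have := (Nat.one_le_floor_iff (wt τ θ)).2 h1
    omega
  have h3 := Nat.pow_log_le_self 2 h2
  have h4 : ((2 ^ lev τ θ : ℕ) : ℝ) ≤ (⌊wt τ θ⌋₊ : ℝ) := by exact_mod_cast h3
  have h5 := Nat.floor_le (show 0 ≤ wt τ θ by linarith)
  push_cast at h4
  linarith

theorem lt_lev (τ : ℝ) (θ : Torus) : wt τ θ < (2:ℝ) ^ (lev τ θ + 1) := by
  have h3 := Nat.lt_pow_succ_log_self (b := 2) (by norm_num) ⌊wt τ θ⌋₊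
  have h4 : (⌊wt τ θ⌋₊ + 1 : ℝ) ≤ ((2 ^ (lev τ θ + 1) : ℕ) : ℝ) := by exact_mod_cast h3
  have h5 := Nat.lt_floor_add_one (wt τ θ)
  push_cast at h4
  linarith

theorem lev_bound (τ : ℝ) (hτ : 0 < τ) (θ : Torus) :
    lev τ θ < Nat.log 2 ⌊1 + 2 / τ⌋₊ + 1 :=
  Nat.lt_succ_of_le (Nat.log_mono_right (Nat.floor_le_floor (wt_le τ hτ θ)))

/-- dyadic piece -/
def pc (τ : ℝ) (G : ℤ → Torus → ℂ) (i : ℕ) (k : ℤ) (θ : Torus) : ℂ :=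
  if lev τ (θ - ((τ * (k:ℝ)^2 : ℝ) : Torus)) = i then G k θ else 0

theorem pc_BM (τ : ℝ) (G : ℤ → Torus → ℂ) (hG : ∀ k, BM (G k)) (i : ℕ) (k : ℤ) :
    BM (pc τ G i k) := by
  obtain ⟨hm, B, hB⟩ := hG k
  refine ⟨?_, B, fun x => ?_⟩
  · unfold pc
    apply Measurable.ite _ hm measurable_const
    have : Measurable (fun θ : Torus => lev τ (θ - ((τ * (k:ℝ)^2 : ℝ) : Torus))) :=
      (lev_meas τ).comp (by fun_prop)
    exact this (measurableSet_singleton i)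
  · unfold pc
    split_ifs
    · exact hB x
    · simpa using (norm_nonneg _).trans (hB x)

theorem prs_swap (K : Finset ℤ) (l : ℤ) (a b : ℤ → ℂ) :
    ∑ p ∈ prs K l, a p.1 * b p.2 = ∑ p ∈ prs K l, b p.1 * a p.2 := by
  apply Finset.sum_nbij' Prod.swap Prod.swap
  · intro p hp
    simp only [prs, Finset.mem_filter, Finset.mem_product] at hp ⊢
    simp only [Prod.fst_swap, Prod.snd_swap]
    refine ⟨⟨hp.1.2, hp.1.1⟩, by omega⟩
  · intro p hp
    simp only [prs, Finset.mem_filter, Finset.mem_product] at hp ⊢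
    simp only [Prod.fst_swap, Prod.snd_swap]
    refine ⟨⟨hp.1.2, hp.1.1⟩, by omega⟩
  · intro p _; simp
  · intro p _; simp
  · intro p _; simp [mul_comm]

/-- `2^{1/8}` -/
def s8 : ℝ := (2:ℝ) ^ ((1:ℝ) / 8)

theorem s8_pow : s8 ^ 8 = 2 := by
  unfold s8
  rw [← Real.rpow_natCast, ← Real.rpow_mul (by norm_num)]
  norm_num

theorem s8_pos : 0 < s8 := by unfold s8; positivity

theorem one_lt_s8 : 1 < s8 := Real.one_lt_rpow (by norm_num) (by norm_num)

theorem b_id (i d : ℕ) : (s8⁻¹ ^ d) ^ 2 * ((s8 ^ (3 * i)) ^ 2 * (s8 ^ (3 * (i + d))) ^ 2)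
    = 2 ^ i * Real.sqrt (2 ^ (i + d)) := by
  have h : Real.sqrt (2 ^ (i + d)) = s8 ^ (4 * (i + d)) := by
    rw [Real.sqrt_eq_iff_mul_self_eq (by positivity) (by have := s8_pos; positivity), ← s8_pow]
    ring
  have hs := s8_pos
  rw [h, ← s8_pow]
  rw [inv_pow, inv_pow, inv_mul_eq_iff_eq_mul₀ (by positivity)]
  ring

theorem lev_weight (τ : ℝ) (θ : Torus) : (s8 ^ (3 * lev τ θ)) ^ 2 ≤ wt τ θ ^ ((3:ℝ) / 4) := by
  have h := Real.rpow_le_rpow (by positivity) (lev_le τ θ) (show (0:ℝ) ≤ 3 / 4 by norm_num)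
  refine le_trans (le_of_eq ?_) h
  unfold s8
  rw [← Real.rpow_natCast, ← Real.rpow_natCast, ← Real.rpow_natCast,
    ← Real.rpow_mul (by positivity), ← Real.rpow_mul (by positivity),
    ← Real.rpow_mul (by positivity)]
  congr 1
  push_cast
  ring

theorem core (τ : ℝ) (hτ : 0 < τ) (K : Finset ℤ)
    (hK : ∀ k ∈ K, τ * (k : ℝ) ^ 2 ≤ 1) (G : ℤ → Torus → ℂ) (hG : ∀ k, BM (G k))
    (S : Finset ℤ) :
    ∑ n ∈ S, ∑ l ∈ (K ×ˢ K).image (fun p => p.1 + p.2),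
      ‖∑ p ∈ prs K l, fourierCoeff (G p.1) n * fourierCoeff (G p.2) n‖ ^ 2
    ≤ 14 * (2 * (1 - s8⁻¹)⁻¹) ^ 2 * τ *
      (∑ k ∈ K, ∫ θ, wt τ (θ - ((τ * (k:ℝ)^2 : ℝ) : Torus)) ^ ((3:ℝ)/4) * ‖G k θ‖ ^ 2
        ∂haarAddCircle) ^ 2 := by
  classical
  set J := Nat.log 2 ⌊1 + 2 / τ⌋₊ + 1 with hJ
  set Λ := (K ×ˢ K).image (fun p => p.1 + p.2) with hΛ
  have hpc := pc_BM τ G hG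
  have hsupp : ∀ i k θ, pc τ G i k θ ≠ 0 →
      chord (θ - ((τ * (k:ℝ)^2 : ℝ) : Torus)) ≤ τ * 2 ^ (i + 1) := by
    intro i k θ h
    unfold pc at h
    have h1 : lev τ (θ - ((τ * (k:ℝ)^2 : ℝ) : Torus)) = i := by
      by_contra hne; simp [hne] at h
    refine (chord_le_wt τ hτ _).trans ?_
    apply mul_le_mul_of_nonneg_left _ hτ.le
    rw [← h1]
    exact (lt_lev τ _).le
  have hdec : ∀ k, G k = ∑ i ∈ Finset.range J, pc τ G i k := by
    intro k
    ext θ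
    rw [Finset.sum_apply]
    unfold pc
    rw [Finset.sum_ite_eq, if_pos (Finset.mem_range.2 (lev_bound τ hτ _))]
  have hdecc : ∀ k n, fourierCoeff (G k) n
      = ∑ i ∈ Finset.range J, fourierCoeff (pc τ G i k) n := by
    intro k n
    conv_lhs => rw [hdec k]
    rw [fourierCoeff.sum _ _ (fun i _ => (hpc i k).integrable), Finset.sum_apply]
  set a : ℕ → ℝ := fun i => ∑ k ∈ K, ∫ θ, ‖pc τ G i k θ‖ ^ 2 ∂haarAddCircle with ha
  have ha0 : ∀ i, 0 ≤ a i := fun i => Finset.sum_nonneg (fun k _ =>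
    integral_nonneg (fun x => by positivity))
  set β : ℕ → ℝ := fun i => s8 ^ (3 * i) * Real.sqrt (a i) with hβ
  have hs := s8_pos
  have hβ0 : ∀ i, 0 ≤ β i := fun i => by simp only [hβ]; positivity
  have hβ2 : ∀ i, β i ^ 2 = (s8 ^ (3 * i)) ^ 2 * a i := fun i => by
    simp only [hβ]; rw [mul_pow, Real.sq_sqrt (ha0 i)]
  have hbil : ∀ i d : ℕ, ∑ n ∈ S, ∑ l ∈ Λ,
      ‖∑ p ∈ prs K l, fourierCoeff (pc τ G i p.1) n * fourierCoeff (pc τ G (i + d) p.2) n‖ ^ 2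
      ≤ (Real.sqrt (14 * τ) * (s8⁻¹ ^ d * (β i * β (i + d)))) ^ 2 := by
    intro i d
    refine (bilinear τ hτ i (i + d) (by omega) K hK (pc τ G i) (pc τ G (i + d)) (hpc i)
      (hpc (i + d)) (hsupp i) (hsupp (i + d)) S).trans (le_of_eq ?_)
    rw [mul_pow, mul_pow, mul_pow, Real.sq_sqrt (by positivity), hβ2, hβ2]
    have := b_id i d
    calc _ = 14 * τ * (2 ^ i * Real.sqrt (2 ^ (i + d))) * (a i * a (i + d)) := by
            simp only [ha]; ring
      _ = _ := by rw [← this]; ring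
  have hr0 : 0 ≤ s8⁻¹ := by positivity
  have hr1 : s8⁻¹ < 1 := inv_lt_one_of_one_lt₀ one_lt_s8
  have hm := mink (S ×ˢ Λ) (Finset.range J ×ˢ Finset.range J)
    (fun q nl => ∑ p ∈ prs K nl.2,
      fourierCoeff (pc τ G q.1 p.1) nl.1 * fourierCoeff (pc τ G q.2 p.2) nl.1)
    (fun q => Real.sqrt (14 * τ) * (s8⁻¹ ^ ((q.1 - q.2) + (q.2 - q.1)) * (β q.1 * β q.2)))
    (fun q _ => by have := hβ0 q.1; have := hβ0 q.2; positivity)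
    (by
      rintro ⟨i, j⟩ _
      rw [Finset.sum_product]
      simp only
      rcases le_total i j with h | h
      · obtain ⟨d, rfl⟩ := Nat.exists_eq_add_of_le h
        rw [show i - (i + d) + (i + d - i) = d by omega]
        exact hbil i d
      · obtain ⟨d, rfl⟩ := Nat.exists_eq_add_of_le h
        rw [show (j + d) - j + (j - (j + d)) = d by omega, mul_comm (β (j + d))]
        refine le_trans (le_of_eq ?_) (hbil j d)
        apply Finset.sum_congr rfl
        intro n _
        apply Finset.sum_congr rfl
        intro l _
        rw [prs_swap K l (fun k => fourierCoeff (pc τ G (j + d) k) n)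
          (fun k => fourierCoeff (pc τ G j k) n)])
  have hlhs : ∑ n ∈ S, ∑ l ∈ Λ,
      ‖∑ p ∈ prs K l, fourierCoeff (G p.1) n * fourierCoeff (G p.2) n‖ ^ 2
      = ∑ x ∈ S ×ˢ Λ, ‖∑ q ∈ Finset.range J ×ˢ Finset.range J, ∑ p ∈ prs K x.2,
      fourierCoeff (pc τ G q.1 p.1) x.1 * fourierCoeff (pc τ G q.2 p.2) x.1‖ ^ 2 := by
    rw [Finset.sum_product]
    apply Finset.sum_congr rfl
    intro n _
    apply Finset.sum_congr rfl
    intro l _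
    simp only
    rw [Finset.sum_comm]
    congr 2
    apply Finset.sum_congr rfl
    intro p _
    rw [hdecc, hdecc, Finset.sum_mul_sum, Finset.sum_product]
  rw [hlhs]
  refine hm.trans ?_
  rw [← Finset.mul_sum, mul_pow, Real.sq_sqrt (by positivity)]
  have hsch := schur s8⁻¹ hr0 hr1 J β
  have hsum : ∑ i ∈ Finset.range J, β i ^ 2 ≤ ∑ k ∈ K,
      ∫ θ, wt τ (θ - ((τ * (k:ℝ)^2 : ℝ) : Torus)) ^ ((3:ℝ)/4) * ‖G k θ‖ ^ 2 ∂haarAddCircle := by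
    simp_rw [hβ2, ha, Finset.mul_sum]
    rw [Finset.sum_comm]
    apply Finset.sum_le_sum
    intro k _
    simp_rw [← integral_const_mul]
    rw [← integral_finsetSum _ (fun i _ => (hpc i k).normsq.integrable.const_mul _)]
    apply integral_mono_of_nonneg
    · exact Filter.Eventually.of_forall (fun x => Finset.sum_nonneg (fun i _ => by positivity))
    · apply Integrable.bdd_mul (c := (1 + 2 / τ) ^ ((3:ℝ)/4)) (hG k).normsq.integrable
      · apply Measurable.aestronglyMeasurable
        have := (wt_cont τ).measurable
        fun_prop
      · apply Filter.Eventually.of_forall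
        intro θ
        have h1 := one_le_wt τ (θ - ((τ * (k:ℝ)^2 : ℝ) : Torus))
        rw [Real.norm_of_nonneg (by positivity)]
        exact Real.rpow_le_rpow (by linarith) (wt_le τ hτ _) (by norm_num)
    · apply Filter.Eventually.of_forall
      intro θ
      simp only
      set L := lev τ (θ - ((τ * (k:ℝ)^2 : ℝ) : Torus)) with hL
      have : ∑ i ∈ Finset.range J, (s8 ^ (3 * i)) ^ 2 * ‖pc τ G i k θ‖ ^ 2
          = (s8 ^ (3 * L)) ^ 2 * ‖G k θ‖ ^ 2 := by
        rw [Finset.sum_eq_single L]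
        · unfold pc; rw [if_pos hL.symm]
        · intro i _ hi
          unfold pc; rw [← hL, if_neg (Ne.symm hi)]; simp
        · intro h
          exact absurd (Finset.mem_range.2 (lev_bound τ hτ _)) h
      rw [this]
      exact mul_le_mul_of_nonneg_right (lev_weight τ _) (by positivity)
  have hnn : 0 ≤ ∑ p ∈ Finset.range J ×ˢ Finset.range J,
      s8⁻¹ ^ ((p.1 - p.2) + (p.2 - p.1)) * (β p.1 * β p.2) :=
    Finset.sum_nonneg (fun q _ => by have := hβ0 q.1; have := hβ0 q.2; positivity)
  have hR : 0 ≤ 2 * (1 - s8⁻¹)⁻¹ := by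
    have : 0 < 1 - s8⁻¹ := by linarith
    positivity
  have hfin := pow_le_pow_left₀ hnn (hsch.trans (mul_le_mul_of_nonneg_left hsum hR)) 2
  rw [mul_pow] at hfin
  calc _ ≤ 14 * τ * _ := mul_le_mul_of_nonneg_left hfin (by positivity)
    _ = _ := by ring


/-- trigonometric polynomial -/
def tp (A : Finset ℤ) (c : ℤ → ℂ) (x : Torus) : ℂ := ∑ l ∈ A, c l * fourier l x

theorem tp_cont (A : Finset ℤ) (c : ℤ → ℂ) : Continuous (tp A c) := by
  unfold tp
  fun_prop

theorem tp_coeff (A : Finset ℤ) (c : ℤ → ℂ) (n : ℤ) :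
    fourierCoeff (tp A c) n = if n ∈ A then c n else 0 := by
  classical
  have h : tp A c = ∑ l ∈ A, fun x => c l * fourier l x := by
    ext x; simp [tp]
  rw [h, fourierCoeff.sum, Finset.sum_apply]
  · simp_rw [fourierCoeff.const_mul, fourierCoeff_fourier, Pi.single_apply, mul_ite, mul_one,
      mul_zero]
    rw [Finset.sum_ite_eq]
  · intro l _
    exact (BM.of_continuous (by fun_prop)).integrable

theorem cont_memLp {f : Torus → ℂ} (hf : Continuous f) (p : ℝ≥0∞) :
    MemLp f p (haarAddCircle (T := 2 * Real.pi)) := by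
  obtain ⟨hm, B, hB⟩ := BM.of_continuous hf
  exact MemLp.of_bound hm.aestronglyMeasurable B (Filter.Eventually.of_forall hB)

theorem tp_parseval (A : Finset ℤ) (c : ℤ → ℂ) :
    ∫ x, ‖tp A c x‖ ^ 2 ∂haarAddCircle = ∑ l ∈ A, ‖c l‖ ^ 2 := by
  classical
  have h := parseval (cont_memLp (tp_cont A c) 2)
  have h2 : HasSum (fun n => ‖fourierCoeff (tp A c) n‖ ^ 2)
      (∑ l ∈ A, ‖fourierCoeff (tp A c) l‖ ^ 2) := by
    apply hasSum_sum_of_ne_finset_zero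
    intro n hn
    rw [tp_coeff, if_neg hn]; simp
  rw [h.unique h2]
  apply Finset.sum_congr rfl
  intro l hl
  rw [tp_coeff, if_pos hl]

theorem tp_sq (K : Finset ℤ) (c : ℤ → ℂ) (x : Torus) :
    tp K c x ^ 2 = tp ((K ×ˢ K).image (fun p => p.1 + p.2))
      (fun l => ∑ p ∈ prs K l, c p.1 * c p.2) x := by
  classical
  unfold tp
  rw [sq, Finset.sum_mul_sum, ← Finset.sum_product',
    ← Finset.sum_fiberwise_of_maps_to (g := fun p : ℤ × ℤ => p.1 + p.2)
      (t := (K ×ˢ K).image (fun p => p.1 + p.2)) (fun p hp => Finset.mem_image_of_mem _ hp)]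
  apply Finset.sum_congr rfl
  intro l _
  rw [Finset.sum_mul]
  unfold prs
  apply Finset.sum_congr rfl
  intro p hp
  rw [← (Finset.mem_filter.1 hp).2, fourier_add]
  ring

theorem tp_L4 (K : Finset ℤ) (c : ℤ → ℂ) :
    (eLpNorm (tp K c) (ENNReal.ofReal 4) haarAddCircle).toReal ^ (4:ℝ)
      = ∑ l ∈ (K ×ˢ K).image (fun p => p.1 + p.2), ‖∑ p ∈ prs K l, c p.1 * c p.2‖ ^ 2 := by
  rw [← tp_parseval, (cont_memLp (tp_cont K c) (ENNReal.ofReal 4)).eLpNorm_eq_integral_rpow_norm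
    (by simp) (by simp)]
  rw [ENNReal.toReal_ofReal (by norm_num : (0:ℝ) ≤ 4)]
  have hnn : 0 ≤ ∫ a, ‖tp K c a‖ ^ (4:ℝ) ∂(haarAddCircle (T := 2 * Real.pi)) :=
    integral_nonneg (fun x => by positivity)
  rw [ENNReal.toReal_ofReal (by positivity), ← Real.rpow_mul hnn,
    inv_mul_cancel₀ (by norm_num), Real.rpow_one]
  congr 1
  ext x
  rw [← tp_sq, norm_pow, ← pow_mul]
  exact_mod_cast Real.rpow_natCast ‖tp K c x‖ 4

/-- frequencies kept by the cutoff -/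
def KK (τ : ℝ) : Finset ℤ :=
  Finset.Icc (-⌊τ ^ (-(1 : ℝ) / 2)⌋) ⌊τ ^ (-(1 : ℝ) / 2)⌋

theorem mem_KK (τ : ℝ) (k : ℤ) : k ∈ KK τ ↔ |(k : ℝ)| ≤ τ ^ (-(1 : ℝ) / 2) := by
  unfold KK
  rw [Finset.mem_Icc, ← abs_le, Int.le_floor]
  push_cast
  rfl

theorem KK_sq (τ : ℝ) (hτ : 0 < τ) : ∀ k ∈ KK τ, τ * (k : ℝ) ^ 2 ≤ 1 := by
  intro k hk
  rw [mem_KK] at hk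
  have h1 := pow_le_pow_left₀ (abs_nonneg _) hk 2
  rw [sq_abs, ← Real.rpow_natCast (τ ^ (-(1 : ℝ) / 2)), ← Real.rpow_mul hτ.le] at h1
  norm_num at h1
  rw [Real.rpow_neg_one] at h1
  calc τ * (k:ℝ)^2 ≤ τ * τ⁻¹ := mul_le_mul_of_nonneg_left h1 hτ.le
    _ = 1 := mul_inv_cancel₀ hτ.ne'

theorem projC_eq (τ : ℝ) (f : Torus → ℂ) : projC τ f = tp (KK τ) (fourierCoeff f) := by
  ext x
  unfold projC tp
  rw [tsum_eq_sum (s := KK τ)]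
  · apply Finset.sum_congr rfl
    intro k hk
    rw [if_pos ((mem_KK τ k).1 hk)]
  · intro k hk
    rw [if_neg (fun h => hk ((mem_KK τ k).2 h))]

theorem scale_integral (τ : ℝ) (hτ : 0 < τ) (F : Torus → ℝ) :
    ∫ σ in Set.Ioc (-(Real.pi / τ)) (Real.pi / τ), F ((τ * σ : ℝ) : Torus)
      = 2 * Real.pi / τ * ∫ θ, F θ ∂haarAddCircle := by
  have hp := Real.pi_pos
  have hle : -(Real.pi / τ) ≤ Real.pi / τ := by
    have : 0 < Real.pi / τ := by positivity
    linarith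
  rw [← intervalIntegral.integral_of_le hle,
    intervalIntegral.integral_comp_mul_left (fun x : ℝ => F (x : Torus)) hτ.ne',
    integral_haarAddCircle, ← AddCircle.intervalIntegral_preimage (2 * Real.pi) (-Real.pi) F]
  have e1 : τ * -(Real.pi / τ) = -Real.pi := by field_simp
  have e2 : τ * (Real.pi / τ) = -Real.pi + 2 * Real.pi := by field_simp; ring
  rw [e1, e2, smul_eq_mul, smul_eq_mul]
  field_simp

theorem wt_eq (τ : ℝ) (hτ : 0 < τ) (σ : ℝ) (k : ℤ) :
    jbr ‖dtau τ (σ - (k:ℝ)^2)‖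
      = wt τ (((τ * σ : ℝ) : Torus) - ((τ * (k:ℝ)^2 : ℝ) : Torus)) := by
  unfold wt dtau
  rw [← AddCircle.coe_sub, chord_coe, norm_div, Complex.norm_real, Real.norm_of_nonneg hτ.le]
  congr 4
  push_cast
  ring_nf

theorem xd_lower (τ : ℝ) (hτ : 0 < τ) (u : ℤ → Torus → ℂ)
    (hu : ∀ n, MemLp (u n) 2 (haarAddCircle (T := 2 * Real.pi))) (S : Finset ℤ)
    (hS : ∀ n, n ∉ S → u n = 0) (K : Finset ℤ) :
    2 * Real.pi * τ * ∑ k ∈ K, ∫ θ, wt τ (θ - ((τ * (k:ℝ)^2 : ℝ) : Torus)) ^ ((3:ℝ)/4) *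
      ‖tp S (fun m => fourierCoeff (u m) k) θ‖ ^ 2 ∂haarAddCircle
      ≤ XdNorm τ 0 (3 / 8) u ^ 2 := by
  have hp := Real.pi_pos
  set G : ℤ → Torus → ℂ := fun k => tp S (fun m => fourierCoeff (u m) k) with hG
  set F : ℤ → Torus → ℝ := fun k θ =>
    wt τ (θ - ((τ * (k:ℝ)^2 : ℝ) : Torus)) ^ ((3:ℝ)/4) * (τ ^ 2 * ‖G k θ‖ ^ 2) with hF
  have hw0 : ∀ θ, 0 ≤ wt τ θ := fun θ => by linarith [one_le_wt τ θ]
  have hF0 : ∀ k θ, 0 ≤ F k θ := fun k θ => by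
    have := hw0 (θ - ((τ * (k:ℝ)^2 : ℝ) : Torus))
    simp only [hF]; positivity
  have hGc : ∀ k, Continuous (G k) := fun k => tp_cont _ _
  have hFc : ∀ k, Continuous (F k) := by
    intro k
    have h1 := hGc k
    have h2 : Continuous (fun θ : Torus => wt τ (θ - ((τ * (k:ℝ)^2 : ℝ) : Torus)) ^ ((3:ℝ)/4)) :=
      Continuous.rpow_const ((wt_cont τ).comp (by fun_prop)) (fun _ => Or.inr (by norm_num))
    simp only [hF]
    fun_prop
  have hterm : ∀ σ : ℝ, ∀ k : ℤ, jbr k ^ (2 * (0:ℝ)) *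
      jbr ‖dtau τ (σ - (k : ℝ) ^ 2)‖ ^ (2 * (3 / 8 : ℝ)) *
      ‖(τ : ℂ) * ∑' m : ℤ, fourierCoeff (u m) k * Complex.exp (Complex.I * m * τ * σ)‖ ^ 2
      = F k ((τ * σ : ℝ) : Torus) := by
    intro σ k
    rw [mul_zero, Real.rpow_zero, one_mul, wt_eq τ hτ, norm_mul, mul_pow, Complex.norm_real,
      Real.norm_of_nonneg hτ.le]
    simp only [hF, hG]
    rw [show (2 * (3 / 8 : ℝ)) = 3 / 4 by norm_num]
    congr 4
    unfold tp
    rw [tsum_eq_sum (s := S)]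
    · apply Finset.sum_congr rfl
      intro m _
      rw [fourier_coe_apply]
      congr 2
      have : (Real.pi : ℂ) ≠ 0 := by exact_mod_cast Real.pi_ne_zero
      push_cast
      field_simp
    · intro m hm
      rw [hS m hm]
      simp [fourierCoeff]
  have hFint : ∀ k, ∫ σ in Set.Ioc (-(Real.pi / τ)) (Real.pi / τ), F k ((τ * σ : ℝ) : Torus)
      = 2 * Real.pi / τ * ∫ θ, F k θ ∂haarAddCircle := fun k => scale_integral τ hτ (F k)
  have hsumm : Summable (fun k => 2 * Real.pi / τ * ∫ θ, F k θ ∂haarAddCircle) := by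
    have hs0 : Summable (fun k : ℤ => ∑ m ∈ S, ‖fourierCoeff (u m) k‖ ^ 2) :=
      summable_sum (fun m _ => (parseval (hu m)).summable)
    apply Summable.mul_left
    refine Summable.of_nonneg_of_le (fun k => integral_nonneg (hF0 k)) ?_
      (hs0.mul_left ((1 + 2 / τ) ^ ((3:ℝ)/4) * τ ^ 2))
    intro k
    rw [← tp_parseval, ← integral_const_mul]
    apply integral_mono_of_nonneg (Filter.Eventually.of_forall (hF0 k))
    · exact (BM.of_continuous (tp_cont _ _)).normsq.integrable.const_mul _
    · apply Filter.Eventually.of_forall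
      intro θ
      simp only [hF, hG]
      rw [mul_assoc]
      apply mul_le_mul_of_nonneg_right _ (by positivity)
      exact Real.rpow_le_rpow (hw0 _) (wt_le τ hτ _) (by norm_num)
  have hHS := hasSum_integral_of_summable_integral_norm
    (μ := volume.restrict (Set.Ioc (-(Real.pi / τ)) (Real.pi / τ)))
    (F := fun (k : ℤ) (σ : ℝ) => F k ((τ * σ : ℝ) : Torus))
    (fun k => ((hFc k).comp ((AddCircle.continuous_mk' _).comp
      (continuous_const.mul continuous_id))).integrableOn_Ioc) (by
      simp_rw [Real.norm_of_nonneg (hF0 _ _)]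
      simp_rw [hFint]
      exact hsumm)
  simp_rw [hFint] at hHS
  unfold XdNorm
  simp_rw [hterm]
  have hnn : ∀ k, 0 ≤ 2 * Real.pi / τ * ∫ θ, F k θ ∂haarAddCircle := fun k =>
    mul_nonneg (by positivity) (integral_nonneg (hF0 k))
  rw [Real.sq_sqrt (hHS.nonneg hnn)]
  refine le_trans (le_of_eq ?_) (sum_le_hasSum K (fun k _ => hnn k) hHS)
  rw [Finset.mul_sum]
  apply Finset.sum_congr rfl
  intro k _
  have : ∫ θ, F k θ ∂haarAddCircle = τ ^ 2 *
      ∫ θ, wt τ (θ - ((τ * (k:ℝ)^2 : ℝ) : Torus)) ^ ((3:ℝ)/4) * ‖G k θ‖ ^ 2 ∂haarAddCircle := by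
    rw [← integral_const_mul]
    congr 1
    ext θ
    simp only [hF]; ring
  rw [this]
  field_simp
  rfl

/-- The discrete Strichartz-type estimate
`‖(Π_τ u_n)‖_{ℓ⁴_τ L⁴} ≲ ‖(u_n)‖_{X^{0,3/8}_τ}`. -/
theorem discrete_l4_estimate :
    ∃ C > (0 : ℝ), ∀ τ ∈ Set.Ioc (0 : ℝ) 1, ∀ u : ℤ → Torus → ℂ,
      (∀ n, MemLp (u n) 2 haarAddCircle) → {n : ℤ | u n ≠ 0}.Finite →
      lpLqNorm τ 4 4 (fun n => projC τ (u n)) ≤ C * XdNorm τ 0 (3 / 8) u := by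
  set C0 : ℝ := 14 * (2 * (1 - s8⁻¹)⁻¹) ^ 2 with hC0
  have hC0n : 0 ≤ C0 := by positivity
  refine ⟨1 + C0, by positivity, ?_⟩
  rintro τ ⟨hτ, _⟩ u hu hfin
  set S := hfin.toFinset with hSdef
  have hS : ∀ n, n ∉ S → u n = 0 := by
    intro n hn
    by_contra h
    exact hn (by rw [hSdef, Set.Finite.mem_toFinset]; exact h)
  set G : ℤ → Torus → ℂ := fun k => tp S (fun m => fourierCoeff (u m) k) with hG
  have hcore := core τ hτ (KK τ) (KK_sq τ hτ) G (fun k => BM.of_continuous (tp_cont _ _)) S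
  have hx := xd_lower τ hτ u hu S hS (KK τ)
  set Q := ∑ k ∈ KK τ, ∫ θ, wt τ (θ - ((τ * (k:ℝ)^2 : ℝ) : Torus)) ^ ((3:ℝ)/4) *
      ‖G k θ‖ ^ 2 ∂haarAddCircle with hQ
  have hQ0 : 0 ≤ Q := Finset.sum_nonneg (fun k _ => integral_nonneg (fun θ => by
    have := one_le_wt τ (θ - ((τ * (k:ℝ)^2 : ℝ) : Torus))
    positivity))
  set X := XdNorm τ 0 (3 / 8) u with hX
  have hX0 : 0 ≤ X := Real.sqrt_nonneg _
  have hsum : ∑' n : ℤ, (eLpNorm (projC τ (u n)) (ENNReal.ofReal 4) haarAddCircle).toReal ^ (4:ℝ)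
      ≤ C0 * τ * Q ^ 2 := by
    rw [tsum_eq_sum (s := S)]
    · refine le_trans (le_of_eq ?_) hcore
      apply Finset.sum_congr rfl
      intro n hn
      rw [projC_eq, tp_L4]
      apply Finset.sum_congr rfl
      intro l _
      simp only [hG, tp_coeff, if_pos hn]
    · intro n hn
      have : projC τ (u n) = 0 := by
        rw [projC_eq, hS n hn]
        ext x
        simp [tp, fourierCoeff]
      rw [this, eLpNorm_zero]
      simp
  have hp := Real.pi_gt_three
  have h1 : τ * Q ≤ X ^ 2 := by
    have : 0 ≤ τ * Q := by positivity
    nlinarith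
  have h2 : (τ * Q) ^ 2 ≤ (X ^ 2) ^ 2 := pow_le_pow_left₀ (by positivity) h1 2
  have h3 : C0 ≤ (1 + C0) ^ 4 := by
    have := one_add_mul_le_pow (show (-2:ℝ) ≤ C0 by linarith) 4
    push_cast at this
    linarith
  unfold lpLqNorm
  have hZ0 : 0 ≤ τ * ∑' n : ℤ,
      (eLpNorm (projC τ (u n)) (ENNReal.ofReal 4) haarAddCircle).toReal ^ (4:ℝ) :=
    mul_nonneg hτ.le (tsum_nonneg (fun n => by positivity))
  have hZ : τ * ∑' n : ℤ,
      (eLpNorm (projC τ (u n)) (ENNReal.ofReal 4) haarAddCircle).toReal ^ (4:ℝ)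
      ≤ ((1 + C0) * X) ^ (4:ℝ) := by
    rw [show (4:ℝ) = ((4:ℕ):ℝ) by norm_num] at hsum ⊢
    rw [Real.rpow_natCast ((1 + C0) * X)]
    calc _ ≤ τ * (C0 * τ * Q ^ 2) := mul_le_mul_of_nonneg_left hsum hτ.le
      _ = C0 * (τ * Q) ^ 2 := by ring
      _ ≤ (1 + C0) ^ 4 * (X ^ 2) ^ 2 := mul_le_mul h3 h2 (by positivity) (by positivity)
      _ = _ := by ring
  have hfinal := Real.rpow_le_rpow hZ0 hZ (show (0:ℝ) ≤ 1 / 4 by norm_num)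
  rw [← Real.rpow_mul (by positivity)] at hfinal
  norm_num at hfinal ⊢
  exact hfinal
end
end
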